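/- Let X⁺ = 𝒜^ℕ be the one-sided full shift and let T ⊆ 𝒜 × 𝒜 be such that X₀⁺ = { x ∈ X⁺ : (x_i, x_{i+1}) ∈ T for all i ≥ 0 } is a nonempty proper subshift of X⁺ (a one-step subshift of finite type). Let (a_j)_{j≥0} be a decreasing sequence of positive reals converging to 0 with a_j ≥ 1/j for all j ≥ 1, and define φ⁺ : X⁺ → ℝ by φ⁺(x) = 0 if x ∈ X₀⁺ and φ⁺(x) = −a_j if dist(x, X₀⁺) = 2^{−j}. Then φ⁺ has a freezing phase transition at some β_c > 0, and ZTA(φ⁺) coincides with the set of measures of maximal entropy on X₀⁺. -/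

import Mathlib

open MeasureTheory Filter Topology
open scoped ENNReal Classical

namespace Freezing

/-- The one-sided configuration space `X⁺ = 𝒜^ℕ`. -/
abbrev Cfg1 (A : Type) : Type := ℕ → A

section Defs

variable {A : Type} [Fintype A] [TopologicalSpace A] [DiscreteTopology A]
  [MeasurableSpace A] [BorelSpace A]

/-- The one-sided shift `σ(x)_i = x_{i+1}`. -/
def shift1 (x : Cfg1 A) : Cfg1 A := fun i => x (i + 1)

/-- Shift-invariance of a measure. -/
def Invariant1 (μ : Measure (Cfg1 A)) : Prop := Measure.map shift1 μ = μ

/-- The cylinder set `[w]` of a word `w` of length `n`. -/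
def cyl1 (n : ℕ) (w : Fin n → A) : Set (Cfg1 A) := { x | ∀ i : Fin n, x i = w i }

/-- Measure-theoretic entropy `h(μ) = inf_{n ≥ 1} (1/n) Σ_w (-μ[w] log μ[w])`. -/
noncomputable def entropy1 (μ : Measure (Cfg1 A)) : ℝ :=
  ⨅ n : {n : ℕ // 1 ≤ n},
    (n.1 : ℝ)⁻¹ * ∑ w : Fin n.1 → A, Real.negMulLog (μ (cyl1 n.1 w)).toReal

/-- Pressure `p_φ(β) = sup { h(μ) + β ∫ φ dμ }` over shift-invariant probability measures. -/
noncomputable def pressure1 (φ : Cfg1 A → ℝ) (β : ℝ) : ℝ :=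
  sSup { r | ∃ μ : Measure (Cfg1 A), IsProbabilityMeasure μ ∧ Invariant1 μ ∧
    r = entropy1 μ + β * ∫ x, φ x ∂μ }

/-- The set of equilibrium states of `βφ`. -/
def ES1 (φ : Cfg1 A → ℝ) (β : ℝ) : Set (Measure (Cfg1 A)) :=
  { μ | IsProbabilityMeasure μ ∧ Invariant1 μ ∧
      entropy1 μ + β * ∫ x, φ x ∂μ = pressure1 φ β }

/-- `φ` has a freezing phase transition at `βc`. -/
def FreezingPT1 (φ : Cfg1 A → ℝ) (βc : ℝ) : Prop :=
  (∀ β β' : ℝ, βc < β → βc < β' → ES1 φ β = ES1 φ β') ∧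
  (∀ β β' : ℝ, β < βc → βc < β' → ES1 φ β ≠ ES1 φ β')

/-- The zero-temperature accumulation points of `φ`. -/
def ZTA1 (φ : Cfg1 A → ℝ) : Set (Measure (Cfg1 A)) :=
  { μ | IsProbabilityMeasure μ ∧ Invariant1 μ ∧
      ∃ (β : ℕ → ℝ) (μs : ℕ → Measure (Cfg1 A)),
        Tendsto β atTop atTop ∧ (∀ k, μs k ∈ ES1 φ (β k)) ∧
        ∀ f : Cfg1 A → ℝ, Continuous f →
          Tendsto (fun k => ∫ x, f x ∂(μs k)) atTop (𝓝 (∫ x, f x ∂μ)) }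

/-- A one-sided subshift: nonempty, closed, shift-invariant. -/
def IsSubshift1 (X₀ : Set (Cfg1 A)) : Prop :=
  X₀.Nonempty ∧ IsClosed X₀ ∧ ∀ x ∈ X₀, shift1 x ∈ X₀

/-- The language `L_n(X₀)`: words of length `n` appearing at the origin of points of `X₀`. -/
def lang1 (X₀ : Set (Cfg1 A)) (n : ℕ) : Set (Fin n → A) :=
  { w | ∃ x ∈ X₀, ∀ i : Fin n, x i = w i }

/-- Topological entropy `h_top(X₀) = inf_{n ≥ 1} (1/n) log |L_n(X₀)|`. -/
noncomputable def topEnt1 (X₀ : Set (Cfg1 A)) : ℝ :=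
  ⨅ n : {n : ℕ // 1 ≤ n}, (n.1 : ℝ)⁻¹ * Real.log ((lang1 X₀ n.1).ncard)

/-- A measure of maximal entropy on the subshift `X₀`. -/
def IsMME1 (X₀ : Set (Cfg1 A)) (μ : Measure (Cfg1 A)) : Prop :=
  IsProbabilityMeasure μ ∧ Invariant1 μ ∧ μ X₀ = 1 ∧ entropy1 μ = topEnt1 X₀

/-- The metric `dist(x,y) = 2^{-min{i : x_i ≠ y_i}}`. -/
noncomputable def dist1 (x y : Cfg1 A) : ℝ :=
  if x = y then 0 else (2 : ℝ) ^ (-((sInf { i : ℕ | x i ≠ y i } : ℕ) : ℤ))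

/-- Distance from a point to a subshift. -/
noncomputable def distToSub1 (X₀ : Set (Cfg1 A)) (x : Cfg1 A) : ℝ :=
  sInf { r | ∃ y ∈ X₀, r = dist1 x y }

/-- The (topological) support of a measure: points all of whose open neighbourhoods have
positive measure. -/
def supp1 (μ : Measure (Cfg1 A)) : Set (Cfg1 A) :=
  { x | ∀ U : Set (Cfg1 A), IsOpen U → x ∈ U → 0 < μ U }

end Defs


set_option linter.unusedSectionVars false
section Words

variable {A : Type} [Fintype A] [Nonempty A]

lemma shift1_iter (k : ℕ) (x : Cfg1 A) (i : ℕ) : (shift1^[k] x) i = x (i + k) := by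
  induction k generalizing x with
  | zero => rfl
  | succ k ih =>
    rw [Function.iterate_succ_apply, ih]
    simp only [shift1]
    congr 1

noncomputable def extw (n : ℕ) (w : Fin n → A) : Cfg1 A :=
  fun i => if h : i < n then w ⟨i, h⟩ else Classical.arbitrary A

lemma extw_lt {n : ℕ} (w : Fin n → A) {i : ℕ} (h : i < n) : extw n w i = w ⟨i, h⟩ := by
  simp [extw, h]

def Dep (n : ℕ) (f : Cfg1 A → ℝ) : Prop := ∀ x y, (∀ i < n, x i = y i) → f x = f y

noncomputable def wsum (n : ℕ) (f : Cfg1 A → ℝ) : ℝ := ∑ w : Fin n → A, f (extw n w)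

noncomputable def ind (p : Prop) : ℝ := if p then 1 else 0

lemma ind_nonneg (p : Prop) : 0 ≤ ind p := by unfold ind; split_ifs <;> norm_num
lemma ind_le_one (p : Prop) : ind p ≤ 1 := by unfold ind; split_ifs <;> norm_num
lemma ind_true {p : Prop} (h : p) : ind p = 1 := by simp [ind, h]
lemma ind_false {p : Prop} (h : ¬ p) : ind p = 0 := by simp [ind, h]
lemma ind_mono {p q : Prop} (h : p → q) : ind p ≤ ind q := by
  by_cases hp : p
  · rw [ind_true hp, ind_true (h hp)]
  · rw [ind_false hp]; exact ind_nonneg q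
lemma ind_mul (p q : Prop) : ind p * ind q = ind (p ∧ q) := by
  by_cases hp : p <;> by_cases hq : q <;> simp [ind, hp, hq]

lemma wsum_mono {n : ℕ} {f g : Cfg1 A → ℝ} (h : ∀ x, f x ≤ g x) : wsum n f ≤ wsum n g :=
  Finset.sum_le_sum fun _ _ => h _

lemma wsum_nonneg {n : ℕ} {f : Cfg1 A → ℝ} (h : ∀ x, 0 ≤ f x) : 0 ≤ wsum n f :=
  Finset.sum_nonneg fun _ _ => h _

lemma wsum_mul {l m n : ℕ} (hn : n = l + m) {f : Cfg1 A → ℝ} (g : Cfg1 A → ℝ) (hf : Dep l f) :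
    wsum n (fun x => f x * g (shift1^[l] x)) = wsum l f * wsum m g := by
  subst hn
  unfold wsum
  rw [Finset.sum_mul_sum, ← Finset.sum_product', Finset.univ_product_univ]
  symm
  apply Fintype.sum_equiv (Fin.appendEquiv l m)
  rintro ⟨u, v⟩
  have h1 : f (extw l u) = f (extw (l + m) (Fin.appendEquiv l m (u, v))) := by
    apply hf
    intro i hi
    rw [extw_lt _ hi, extw_lt _ (by omega)]
    have : (⟨i, by omega⟩ : Fin (l + m)) = Fin.castAdd m ⟨i, hi⟩ := rfl
    rw [this]
    exact (Fin.append_left u v ⟨i, hi⟩).symm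
  have h2 : extw m v = shift1^[l] (extw (l + m) (Fin.appendEquiv l m (u, v))) := by
    funext i
    rw [shift1_iter]
    by_cases hi : i < m
    · rw [extw_lt _ hi, extw_lt _ (by omega)]
      have : (⟨i + l, by omega⟩ : Fin (l + m)) = Fin.natAdd l ⟨i, hi⟩ := by
        ext; simp; omega
      rw [this]
      exact (Fin.append_right u v ⟨i, hi⟩).symm
    · have h' : ¬ (i + l < l + m) := by omega
      simp [extw, hi, h']
  simp only
  rw [← h1, ← h2]

lemma wsum_one (n : ℕ) : wsum n (fun _ : Cfg1 A => (1 : ℝ)) = (Fintype.card A : ℝ) ^ n := by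
  simp [wsum]

lemma wsum_finset {ι : Type*} (s : Finset ι) (n : ℕ) (f : ι → Cfg1 A → ℝ) :
    wsum n (fun x => ∑ i ∈ s, f i x) = ∑ i ∈ s, wsum n (f i) := by
  unfold wsum; exact Finset.sum_comm

/-- prefix predicate -/
def Pre (X₀ : Set (Cfg1 A)) (n : ℕ) (x : Cfg1 A) : Prop := ∃ y ∈ X₀, ∀ i < n, x i = y i

def Loop (X₀ : Set (Cfg1 A)) (s : A) (m : ℕ) (x : Cfg1 A) : Prop :=
  ∃ y ∈ X₀, (∀ i < m, x i = y i) ∧ y 0 = s ∧ y m = s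

noncomputable def cnt (X₀ : Set (Cfg1 A)) (n : ℕ) : ℝ := wsum n (fun x => ind (Pre X₀ n x))
noncomputable def lcnt (X₀ : Set (Cfg1 A)) (s : A) (n : ℕ) : ℝ :=
  wsum n (fun x => ind (Loop X₀ s n x))
noncomputable def sind (X₀ : Set (Cfg1 A)) (S : Finset A) (n : ℕ) (x : Cfg1 A) : ℝ :=
  ind (Pre X₀ n x ∧ ∀ i < n, x i ∈ S)
noncomputable def scnt (X₀ : Set (Cfg1 A)) (S : Finset A) (n : ℕ) : ℝ :=
  wsum n (sind X₀ S n)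

lemma dep_pre (X₀ : Set (Cfg1 A)) (n : ℕ) : Dep n (fun x => ind (Pre X₀ n x)) := by
  intro x y h
  have : Pre X₀ n x ↔ Pre X₀ n y :=
    ⟨fun ⟨z, hz, e⟩ => ⟨z, hz, fun i hi => (h i hi).symm.trans (e i hi)⟩,
     fun ⟨z, hz, e⟩ => ⟨z, hz, fun i hi => (h i hi).trans (e i hi)⟩⟩
  simp only [this]

lemma dep_loop (X₀ : Set (Cfg1 A)) (s : A) (n : ℕ) : Dep n (fun x => ind (Loop X₀ s n x)) := by
  intro x y h
  have : Loop X₀ s n x ↔ Loop X₀ s n y :=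
    ⟨fun ⟨z, hz, e, r⟩ => ⟨z, hz, fun i hi => (h i hi).symm.trans (e i hi), r⟩,
     fun ⟨z, hz, e, r⟩ => ⟨z, hz, fun i hi => (h i hi).trans (e i hi), r⟩⟩
  simp only [this]

lemma cnt_eq (X₀ : Set (Cfg1 A)) (n : ℕ) : cnt X₀ n = ((lang1 X₀ n).ncard : ℝ) := by
  have h : ∀ w : Fin n → A, Pre X₀ n (extw n w) ↔ w ∈ lang1 X₀ n := by
    intro w
    constructor
    · rintro ⟨y, hy, h⟩
      refine ⟨y, hy, fun i => ?_⟩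
      rw [← h i i.2, extw_lt _ i.2]
    · rintro ⟨y, hy, h⟩
      refine ⟨y, hy, fun i hi => ?_⟩
      rw [extw_lt _ hi, ← h ⟨i, hi⟩]
  unfold cnt wsum ind
  simp only [h]
  rw [Finset.sum_boole, Set.ncard_eq_toFinset_card']
  congr 2
  ext w
  simp

variable {X₀ : Set (Cfg1 A)}

lemma pre_mono {m n : ℕ} (h : m ≤ n) {x : Cfg1 A} : Pre X₀ n x → Pre X₀ m x :=
  fun ⟨y, hy, e⟩ => ⟨y, hy, fun i hi => e i (by omega)⟩

lemma loop_pre {s : A} {n : ℕ} {x : Cfg1 A} : Loop X₀ s n x → Pre X₀ n x :=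
  fun ⟨y, hy, e, _⟩ => ⟨y, hy, e⟩

lemma iter_mem (hinv : ∀ x ∈ X₀, shift1 x ∈ X₀) (k : ℕ) {x : Cfg1 A} (hx : x ∈ X₀) :
    shift1^[k] x ∈ X₀ := by
  induction k with
  | zero => exact hx
  | succ k ih => rw [Function.iterate_succ_apply']; exact hinv _ ih

lemma pre_shift (hinv : ∀ x ∈ X₀, shift1 x ∈ X₀) {k n : ℕ} {x : Cfg1 A} (h : Pre X₀ (n + k) x) :
    Pre X₀ n (shift1^[k] x) := by
  obtain ⟨y, hy, e⟩ := h
  refine ⟨_, iter_mem hinv k hy, fun i hi => ?_⟩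
  rw [shift1_iter, shift1_iter]
  exact e _ (by omega)

lemma cnt_nonneg (n : ℕ) : 0 ≤ cnt X₀ n := wsum_nonneg fun _ => ind_nonneg _
lemma lcnt_nonneg (s : A) (n : ℕ) : 0 ≤ lcnt X₀ s n := wsum_nonneg fun _ => ind_nonneg _
lemma lcnt_le (s : A) (n : ℕ) : lcnt X₀ s n ≤ cnt X₀ n :=
  wsum_mono fun _ => ind_mono loop_pre

lemma cnt_le_card (n : ℕ) : cnt X₀ n ≤ (Fintype.card A : ℝ) ^ n := by
  rw [← wsum_one]; exact wsum_mono fun _ => ind_le_one _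

lemma cnt_ge_one (hne : X₀.Nonempty) (n : ℕ) : 1 ≤ cnt X₀ n := by
  rw [cnt_eq]
  have : 0 < (lang1 X₀ n).ncard := by
    rw [Set.ncard_pos]
    obtain ⟨x, hx⟩ := hne
    exact ⟨fun i => x i, x, hx, fun i => rfl⟩
  exact_mod_cast this

lemma cnt_add (hinv : ∀ x ∈ X₀, shift1 x ∈ X₀) (m n : ℕ) :
    cnt X₀ (m + n) ≤ cnt X₀ m * cnt X₀ n := by
  unfold cnt
  rw [← wsum_mul rfl _ (dep_pre X₀ m)]
  refine wsum_mono fun x => ?_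
  rw [ind_mul]
  exact ind_mono fun h => ⟨pre_mono (by omega) h, pre_shift hinv (by rwa [add_comm])⟩

lemma cnt_zero_le : cnt X₀ 0 ≤ 1 := by simpa using cnt_le_card (X₀ := X₀) 0

lemma cnt_mul (hinv : ∀ x ∈ X₀, shift1 x ∈ X₀) (m q : ℕ) :
    cnt X₀ (m * q) ≤ cnt X₀ m ^ q := by
  induction q with
  | zero => simpa using cnt_zero_le
  | succ q ih =>
    rw [mul_add, mul_one, pow_succ]
    exact (cnt_add hinv _ _).trans (mul_le_mul_of_nonneg_right ih (cnt_nonneg _))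

end Words

section SFT

variable {A : Type} [Fintype A] [Nonempty A] {X₀ : Set (Cfg1 A)} {T : Set (A × A)}

lemma sft_inv (hX : X₀ = { x : Cfg1 A | ∀ i : ℕ, (x i, x (i + 1)) ∈ T }) :
    ∀ x ∈ X₀, shift1 x ∈ X₀ := by
  subst hX; intro x hx i; exact hx (i + 1)

lemma sft_glue (hX : X₀ = { x : Cfg1 A | ∀ i : ℕ, (x i, x (i + 1)) ∈ T }) {y z : Cfg1 A} {m : ℕ}
    (hy : y ∈ X₀) (hz : z ∈ X₀) (h : y m = z 0) :
    (fun t => if t < m then y t else z (t - m)) ∈ X₀ := by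
  subst hX
  intro i
  have hy := hy i
  have hz := hz (i - m)
  simp only
  split_ifs with h1 h2 h2
  · exact hy
  · have : i + 1 = m := by omega
    rw [← this] at h ⊢
    simpa [← h] using hy
  · omega
  · have : i + 1 - m = i - m + 1 := by omega
    rw [this]; exact hz

lemma sft_mem (hX : X₀ = { x : Cfg1 A | ∀ i : ℕ, (x i, x (i + 1)) ∈ T }) {x : Cfg1 A}
    (h : ∀ n, Pre X₀ n x) : x ∈ X₀ := by
  rw [hX]
  intro i
  obtain ⟨y, hy, e⟩ := h (i + 2)
  rw [e i (by omega), e (i + 1) (by omega)]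
  rw [hX] at hy
  exact hy i

lemma pre_glue (hX : X₀ = { x : Cfg1 A | ∀ i : ℕ, (x i, x (i + 1)) ∈ T }) {k m : ℕ} {x : Cfg1 A}
    (h1 : Pre X₀ (k + 1) x) (h2 : Pre X₀ (m + 1) (shift1^[k] x)) : Pre X₀ (k + m + 1) x := by
  obtain ⟨y, hy, e⟩ := h1
  obtain ⟨z, hz, e'⟩ := h2
  have h0 : y k = z 0 := by
    rw [← e k (by omega), ← e' 0 (by omega), shift1_iter, zero_add]
  refine ⟨_, sft_glue hX hy hz h0, fun i hi => ?_⟩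
  split_ifs with h
  · exact e i (by omega)
  · rw [← e' _ (by omega), shift1_iter]; congr 1; omega

lemma lcnt_add (hX : X₀ = { x : Cfg1 A | ∀ i : ℕ, (x i, x (i + 1)) ∈ T }) (s : A) (m n : ℕ) :
    lcnt X₀ s m * lcnt X₀ s n ≤ lcnt X₀ s (m + n) := by
  unfold lcnt
  rw [← wsum_mul rfl _ (dep_loop X₀ s m)]
  refine wsum_mono fun x => ?_
  rw [ind_mul]
  refine ind_mono ?_
  rintro ⟨⟨y, hy, e, y0, ym⟩, z, hz, e', z0, zm⟩
  refine ⟨_, sft_glue hX hy hz (ym.trans z0.symm), fun i hi => ?_, ?_, ?_⟩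
  · split_ifs with h
    · exact e i h
    · rw [← e' _ (by omega), shift1_iter]; congr 1; omega
  · split_ifs with h
    · exact y0
    · simpa using z0
  · simp [zm]

lemma lcnt_pow (hX : X₀ = { x : Cfg1 A | ∀ i : ℕ, (x i, x (i + 1)) ∈ T }) (s : A) (m q : ℕ) :
    lcnt X₀ s m ^ (q + 1) ≤ lcnt X₀ s (m * (q + 1)) := by
  induction q with
  | zero => simp
  | succ q ih =>
    rw [mul_add, mul_one, pow_succ]
    exact (mul_le_mul_of_nonneg_right ih (lcnt_nonneg _ _)).trans (lcnt_add hX _ _ _)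

lemma lcnt_bound (hX : X₀ = { x : Cfg1 A | ∀ i : ℕ, (x i, x (i + 1)) ∈ T })
    (s : A) (m : ℕ) : lcnt X₀ s m ≤ Real.exp (topEnt1 X₀) ^ m := by
  rcases Nat.eq_zero_or_pos m with rfl | hm
  · simpa using (lcnt_le s 0).trans (cnt_zero_le (X₀ := X₀))
  rcases (lcnt_nonneg (X₀ := X₀) s m).eq_or_lt with h0 | h0
  · rw [← h0]; positivity
  rw [← Real.exp_nat_mul, ← Real.log_le_iff_le_exp h0]
  have hm' : (0 : ℝ) < m := by exact_mod_cast hm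
  have : (m : ℝ)⁻¹ * Real.log (lcnt X₀ s m) ≤ topEnt1 X₀ := by
    unfold topEnt1
    haveI : Nonempty {n : ℕ // 1 ≤ n} := ⟨⟨1, le_rfl⟩⟩
    refine le_ciInf ?_
    rintro ⟨p, hp⟩
    simp only
    rw [← cnt_eq]
    have hp' : (0 : ℝ) < p := by exact_mod_cast hp
    have h1 : lcnt X₀ s m ^ p ≤ cnt X₀ p ^ m := by
      obtain ⟨q, rfl⟩ : ∃ q, p = q + 1 := ⟨p - 1, by omega⟩
      refine (lcnt_pow hX s m q).trans ((lcnt_le _ _).trans ?_)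
      rw [mul_comm]
      exact cnt_mul (sft_inv hX) _ _
    have h2 := Real.log_le_log (by positivity) h1
    rw [Real.log_pow, Real.log_pow] at h2
    rw [inv_mul_le_iff₀ hm', ← mul_assoc, mul_comm (m : ℝ), mul_assoc, ← div_eq_inv_mul, le_div_iff₀ hp']
    linarith
  rw [inv_mul_le_iff₀ hm'] at this
  exact this

lemma topEnt_nonneg (hne : X₀.Nonempty) : 0 ≤ topEnt1 X₀ := by
  unfold topEnt1
  refine Real.iInf_nonneg ?_
  rintro ⟨p, hp⟩
  simp only
  rw [← cnt_eq]
  exact mul_nonneg (by positivity) (Real.log_nonneg (cnt_ge_one hne p))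

lemma scnt_bound (hX : X₀ = { x : Cfg1 A | ∀ i : ℕ, (x i, x (i + 1)) ∈ T }) (hne : X₀.Nonempty)
    (k : ℕ) : ∀ S : Finset A, S.card ≤ k → ∀ n : ℕ, scnt X₀ S n ≤
      ((Fintype.card A : ℝ) ^ 2 * (n + 1)) ^ k * Real.exp (topEnt1 X₀) ^ n := by
  set L := Real.exp (topEnt1 X₀) with hL
  have hL1 : 1 ≤ L := Real.one_le_exp (topEnt_nonneg hne)
  have hA : (1 : ℝ) ≤ Fintype.card A := by exact_mod_cast Fintype.card_pos
  have hz : ∀ S : Finset A, scnt X₀ S 0 ≤ 1 := by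
    intro S
    refine (wsum_mono (g := fun _ => 1) fun _ => ind_le_one _).trans ?_
    rw [wsum_one]; simp
  induction k with
  | zero =>
    intro S hS n
    have hS : S = ∅ := by simpa using hS
    subst hS
    rcases Nat.eq_zero_or_pos n with rfl | hn
    · simpa using hz _
    · have : scnt X₀ ∅ n ≤ 0 := by
        unfold scnt wsum
        refine Finset.sum_nonpos fun w _ => ?_
        refine (ind_false ?_).le
        rintro ⟨-, h⟩
        simpa using h 0 hn
      exact this.trans (by positivity)
  | succ k ih =>
    intro S hS n
    rcases Nat.eq_zero_or_pos n with rfl | hn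
    · refine (hz S).trans ?_
      simp only [Nat.cast_zero, zero_add, mul_one, pow_zero]
      exact one_le_pow₀ (one_le_pow₀ hA)
    have key : ∀ x : Cfg1 A, ind (Pre X₀ n x ∧ ∀ i < n, x i ∈ S) ≤
        ∑ s ∈ S, ∑ m ∈ Finset.range n, ind (Loop X₀ s m x) *
          (1 * sind X₀ (S.erase s) (n - 1 - m) (shift1^[1] (shift1^[m] x))) := by
      intro x
      have hnn : ∀ s ∈ S, ∀ m ∈ Finset.range n, 0 ≤ ind (Loop X₀ s m x) *
          (1 * sind X₀ (S.erase s) (n - 1 - m) (shift1^[1] (shift1^[m] x))) := by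
        intro s _ m _
        simp only [one_mul]
        exact mul_nonneg (ind_nonneg _) (ind_nonneg _)
      by_cases h : Pre X₀ n x ∧ ∀ i < n, x i ∈ S
      swap
      · rw [ind_false h]
        exact Finset.sum_nonneg fun s hs => Finset.sum_nonneg fun m hm => hnn s hs m hm
      obtain ⟨hp, hS'⟩ := h
      rw [ind_true ⟨hp, hS'⟩]
      have hs : x 0 ∈ S := hS' 0 hn
      -- last occurrence
      obtain ⟨m, hm, hmn, hmax⟩ : ∃ m, x m = x 0 ∧ m < n ∧ ∀ t, m < t → t < n → x t ≠ x 0 := by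
        have hne' : ((Finset.range n).filter (fun t => x t = x 0)).Nonempty :=
          ⟨0, by simp [hn]⟩
        refine ⟨((Finset.range n).filter (fun t => x t = x 0)).max' hne', ?_, ?_, ?_⟩
        · exact (Finset.mem_filter.1 (Finset.max'_mem _ hne')).2
        · exact Finset.mem_range.1 (Finset.mem_filter.1 (Finset.max'_mem _ hne')).1
        · intro t h1 h2 h3
          have := Finset.le_max' ((Finset.range n).filter (fun t => x t = x 0)) t (by simp [h2, h3])
          omega
      refine le_trans ?_ (Finset.single_le_sum (f := fun s => ∑ m ∈ Finset.range n,
        ind (Loop X₀ s m x) *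
          (1 * sind X₀ (S.erase s) (n - 1 - m) (shift1^[1] (shift1^[m] x))))
        (fun s hs => Finset.sum_nonneg fun m hm => hnn s hs m hm) hs)
      refine le_trans ?_ (Finset.single_le_sum (f := fun m => 
        ind (Loop X₀ (x 0) m x) *
          (1 * sind X₀ (S.erase (x 0)) (n - 1 - m) (shift1^[1] (shift1^[m] x))))
        (fun m hm => hnn _ hs m hm) (Finset.mem_range.2 hmn))
      simp only [one_mul, sind]
      rw [ind_mul, ind_true]
      refine ⟨?_, ?_, ?_⟩
      · obtain ⟨y, hy, e⟩ := hp
        exact ⟨y, hy, fun i hi => e i (by omega), (e 0 hn).symm, by rw [← e m hmn, hm]⟩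
      · rw [← Function.iterate_add_apply]
        exact pre_shift (sft_inv hX) (pre_mono (by omega) hp)
      · intro i hi
        rw [← Function.iterate_add_apply, shift1_iter]
        exact Finset.mem_erase.2 ⟨hmax _ (by omega) (by omega), hS' _ (by omega)⟩
    calc scnt X₀ S n ≤ _ := wsum_mono key
      _ = ∑ s ∈ S, ∑ m ∈ Finset.range n, lcnt X₀ s m *
            ((Fintype.card A : ℝ) * scnt X₀ (S.erase s) (n - 1 - m)) := by
        rw [wsum_finset]
        refine Finset.sum_congr rfl fun s _ => ?_
        rw [wsum_finset]
        refine Finset.sum_congr rfl fun m hm => ?_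
        have hm := Finset.mem_range.1 hm
        have e1 := wsum_mul (l := m) (m := 1 + (n - 1 - m)) (n := n) (by omega)
          (fun y => 1 * sind X₀ (S.erase s) (n - 1 - m) (shift1^[1] y)) (dep_loop X₀ s m)
        have e2 := wsum_mul (l := 1) (m := n - 1 - m) (f := fun _ => (1 : ℝ)) rfl
          (sind X₀ (S.erase s) (n - 1 - m)) (fun _ _ _ => rfl)
        rw [wsum_one, pow_one] at e2
        rw [e2] at e1
        exact e1
      _ ≤ ∑ s ∈ S, ∑ m ∈ Finset.range n, L ^ n *
            ((Fintype.card A : ℝ) * ((Fintype.card A : ℝ) ^ 2 * (n + 1)) ^ k) := by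
        refine Finset.sum_le_sum fun s hs => Finset.sum_le_sum fun m hm => ?_
        have hm := Finset.mem_range.1 hm
        have h1 := lcnt_bound hX s m
        have h2 := ih (S.erase s) (by rw [Finset.card_erase_of_mem hs]; omega) (n - 1 - m)
        have h3 : ((n - 1 - m : ℕ) : ℝ) + 1 ≤ n + 1 := by
          have : n - 1 - m ≤ n := by omega
          have : ((n - 1 - m : ℕ) : ℝ) ≤ n := by exact_mod_cast this
          linarith
        have h4 : scnt X₀ (S.erase s) (n - 1 - m) ≤
            ((Fintype.card A : ℝ) ^ 2 * (n + 1)) ^ k * L ^ (n - 1 - m) := by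
          refine h2.trans ?_
          gcongr
        calc lcnt X₀ s m * ((Fintype.card A : ℝ) * scnt X₀ (S.erase s) (n - 1 - m))
            ≤ L ^ m * ((Fintype.card A : ℝ) *
              (((Fintype.card A : ℝ) ^ 2 * (n + 1)) ^ k * L ^ (n - 1 - m))) := by
              gcongr
              exact mul_nonneg (by positivity) (wsum_nonneg fun _ => ind_nonneg _)
          _ = (L ^ m * L ^ (n - 1 - m)) * ((Fintype.card A : ℝ) *
              (((Fintype.card A : ℝ) ^ 2 * (n + 1)) ^ k)) := by ring
          _ ≤ _ := by
              gcongr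
              rw [← pow_add]
              exact pow_le_pow_right₀ hL1 (by omega)
      _ ≤ _ := by
        rw [Finset.sum_const, Finset.sum_const, Finset.card_range, nsmul_eq_mul, nsmul_eq_mul]
        have hc : (S.card : ℝ) ≤ Fintype.card A := by exact_mod_cast Finset.card_le_univ S
        calc _ = (S.card : ℝ) * (n : ℝ) * (Fintype.card A : ℝ) *
              (((Fintype.card A : ℝ) ^ 2 * (n + 1)) ^ k * L ^ n) := by ring
          _ ≤ (Fintype.card A : ℝ) * (n + 1 : ℝ) * (Fintype.card A : ℝ) *
              (((Fintype.card A : ℝ) ^ 2 * (n + 1)) ^ k * L ^ n) := by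
              gcongr; linarith
          _ = _ := by ring

lemma cnt_bound (hX : X₀ = { x : Cfg1 A | ∀ i : ℕ, (x i, x (i + 1)) ∈ T }) (hne : X₀.Nonempty) :
    ∃ (C : ℝ) (D : ℕ), 1 ≤ C ∧ ∀ n : ℕ,
      cnt X₀ n ≤ C * (n + 1 : ℝ) ^ D * Real.exp (topEnt1 X₀) ^ n := by
  refine ⟨((Fintype.card A : ℝ) ^ 2) ^ Fintype.card A, Fintype.card A, ?_, fun n => ?_⟩
  · have hA : (1 : ℝ) ≤ Fintype.card A := by exact_mod_cast Fintype.card_pos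
    exact one_le_pow₀ (one_le_pow₀ hA)
  · have h := scnt_bound hX hne _ Finset.univ (Finset.card_univ (α := A)).le n
    rw [mul_pow] at h
    refine le_trans ?_ h
    exact wsum_mono fun x => ind_mono fun h => ⟨h, fun i _ => Finset.mem_univ _⟩

end SFT

set_option linter.unusedSectionVars false
section Phi

variable {A : Type} [Fintype A] [Nonempty A] {X₀ : Set (Cfg1 A)} {T : Set (A × A)}
  {a : ℕ → ℝ} {φ : Cfg1 A → ℝ}

lemma exists_break {x : Cfg1 A} (hne : X₀.Nonempty) {n : ℕ} (h : ¬ Pre X₀ n x) :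
    ∃ j, j + 1 ≤ n ∧ Pre X₀ j x ∧ ¬ Pre X₀ (j + 1) x := by
  have hex : ∃ n, ¬ Pre X₀ n x := ⟨n, h⟩
  have h0 : Nat.find hex ≠ 0 := by
    intro h0
    apply Nat.find_spec hex
    rw [h0]
    obtain ⟨y, hy⟩ := hne
    exact ⟨y, hy, fun i hi => by omega⟩
  obtain ⟨j, hj⟩ := Nat.exists_eq_succ_of_ne_zero h0
  refine ⟨j, ?_, ?_, ?_⟩
  · have := Nat.find_min' hex h
    omega
  · by_contra hc
    have := Nat.find_min' hex hc
    omega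
  · have := Nat.find_spec hex
    rwa [hj] at this

lemma dist_eq {x : Cfg1 A} {j : ℕ} (hj : Pre X₀ j x) (hj' : ¬ Pre X₀ (j + 1) x) :
    distToSub1 X₀ x = (2 : ℝ) ^ (-(j : ℤ)) := by
  have key : ∀ y ∈ X₀, x ≠ y ∧ sInf {i : ℕ | x i ≠ y i} ≤ j := by
    intro y hy
    have : ∃ i < j + 1, x i ≠ y i := by
      by_contra hc
      push Not at hc
      exact hj' ⟨y, hy, hc⟩
    obtain ⟨i, hi, hne⟩ := this
    refine ⟨fun h => hne (by rw [h]), ?_⟩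
    exact (Nat.sInf_le hne).trans (by omega)
  unfold distToSub1
  apply IsLeast.csInf_eq
  constructor
  · obtain ⟨y, hy, e⟩ := hj
    refine ⟨y, hy, ?_⟩
    obtain ⟨h1, h2⟩ := key y hy
    have h3 : sInf {i : ℕ | x i ≠ y i} = j := by
      apply le_antisymm h2
      have hne : {i : ℕ | x i ≠ y i}.Nonempty := by
        by_contra hc
        apply h1
        funext i
        by_contra hi
        exact hc ⟨i, hi⟩
      have := Nat.sInf_mem hne
      by_contra hlt
      exact this (e _ (by omega))
    rw [dist1, if_neg h1, h3]
  · rintro r ⟨y, hy, rfl⟩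
    obtain ⟨h1, h2⟩ := key y hy
    rw [dist1, if_neg h1]
    apply zpow_le_zpow_right₀ (by norm_num)
    have : ((sInf {i : ℕ | x i ≠ y i} : ℕ) : ℤ) ≤ j := by exact_mod_cast h2
    omega

lemma phi_spec (hX : X₀ = { x : Cfg1 A | ∀ i : ℕ, (x i, x (i + 1)) ∈ T }) (hne : X₀.Nonempty)
    (hφ1 : ∀ x ∉ X₀, ∀ j : ℕ, distToSub1 X₀ x = (2 : ℝ) ^ (-(j : ℤ)) → φ x = -(a j))
    {x : Cfg1 A} (hx : x ∉ X₀) : ∃ j, Pre X₀ j x ∧ ¬ Pre X₀ (j + 1) x ∧ φ x = -(a j) := by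
  have : ∃ n, ¬ Pre X₀ n x := by
    by_contra hc
    push Not at hc
    exact hx (sft_mem hX hc)
  obtain ⟨n, hn⟩ := this
  obtain ⟨j, -, h1, h2⟩ := exists_break hne hn
  exact ⟨j, h1, h2, hφ1 x hx j (dist_eq h1 h2)⟩

lemma pre_of_mem {x : Cfg1 A} (hx : x ∈ X₀) (n : ℕ) : Pre X₀ n x := ⟨x, hx, fun _ _ => rfl⟩

lemma phi_upper (hX : X₀ = { x : Cfg1 A | ∀ i : ℕ, (x i, x (i + 1)) ∈ T }) (hne : X₀.Nonempty)
    (hdec : Antitone a)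
    (hφ1 : ∀ x ∉ X₀, ∀ j : ℕ, distToSub1 X₀ x = (2 : ℝ) ^ (-(j : ℤ)) → φ x = -(a j))
    {x : Cfg1 A} {k : ℕ} (hx : ¬ Pre X₀ (k + 1) x) : φ x ≤ - a k := by
  obtain ⟨j, h1, h2, h3⟩ := phi_spec hX hne hφ1 (fun h => hx (pre_of_mem h _))
  rw [h3]
  have : j ≤ k := by
    by_contra hc
    exact hx (pre_mono (by omega) h1)
  linarith [hdec this]

lemma phi_lower (hX : X₀ = { x : Cfg1 A | ∀ i : ℕ, (x i, x (i + 1)) ∈ T }) (hne : X₀.Nonempty)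
    (hpos : ∀ j, 0 < a j) (hdec : Antitone a)
    (hφ0 : ∀ x ∈ X₀, φ x = 0)
    (hφ1 : ∀ x ∉ X₀, ∀ j : ℕ, distToSub1 X₀ x = (2 : ℝ) ^ (-(j : ℤ)) → φ x = -(a j))
    {x : Cfg1 A} {k : ℕ} (hx : Pre X₀ k x) : - a k ≤ φ x := by
  by_cases hm : x ∈ X₀
  · rw [hφ0 x hm]; linarith [hpos k]
  obtain ⟨j, h1, h2, h3⟩ := phi_spec hX hne hφ1 hm
  rw [h3]
  have : k ≤ j := by
    by_contra hc
    exact h2 (pre_mono (by omega) hx)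
  linarith [hdec this]

lemma phi_neg (hX : X₀ = { x : Cfg1 A | ∀ i : ℕ, (x i, x (i + 1)) ∈ T }) (hne : X₀.Nonempty)
    (hpos : ∀ j, 0 < a j)
    (hφ1 : ∀ x ∉ X₀, ∀ j : ℕ, distToSub1 X₀ x = (2 : ℝ) ^ (-(j : ℤ)) → φ x = -(a j))
    {x : Cfg1 A} (hx : x ∉ X₀) : φ x < 0 := by
  obtain ⟨j, h1, h2, h3⟩ := phi_spec hX hne hφ1 hx
  rw [h3]; linarith [hpos j]

lemma isOpen_agree [TopologicalSpace A] [DiscreteTopology A] (x : Cfg1 A) (n : ℕ) :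
    IsOpen {y : Cfg1 A | ∀ i < n, y i = x i} := by
  have : {y : Cfg1 A | ∀ i < n, y i = x i} = ⋂ i ∈ Finset.range n, (fun y : Cfg1 A => y i) ⁻¹' {x i} := by
    ext y; simp
  rw [this]
  exact isOpen_biInter_finset fun i _ => (isOpen_discrete _).preimage (continuous_apply i)

lemma phi_cont [TopologicalSpace A] [DiscreteTopology A]
    (hX : X₀ = { x : Cfg1 A | ∀ i : ℕ, (x i, x (i + 1)) ∈ T }) (hne : X₀.Nonempty)
    (hpos : ∀ j, 0 < a j) (hdec : Antitone a) (hlim : Tendsto a atTop (𝓝 0))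
    (hφ0 : ∀ x ∈ X₀, φ x = 0)
    (hφ1 : ∀ x ∉ X₀, ∀ j : ℕ, distToSub1 X₀ x = (2 : ℝ) ^ (-(j : ℤ)) → φ x = -(a j)) :
    Continuous φ := by
  rw [continuous_iff_continuousAt]
  intro x
  have hN : ∀ n, {y : Cfg1 A | ∀ i < n, y i = x i} ∈ 𝓝 x := fun n =>
    (isOpen_agree x n).mem_nhds (fun i _ => rfl)
  have hneg : ∀ y, φ y ≤ 0 := fun y => by
    by_cases hy : y ∈ X₀
    · exact (hφ0 y hy).le
    · exact (phi_neg hX hne hpos hφ1 hy).le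
  by_cases hx : x ∈ X₀
  · rw [ContinuousAt, hφ0 x hx, Metric.tendsto_nhds]
    intro ε hε
    obtain ⟨k, hk⟩ := (hlim.eventually (gt_mem_nhds hε)).exists
    filter_upwards [hN k] with y hy
    have := phi_lower hX hne hpos hdec hφ0 hφ1 (k := k) (x := y) ⟨x, hx, hy⟩
    rw [Real.dist_eq, sub_zero, abs_lt]
    exact ⟨by linarith, by linarith [hneg y]⟩
  · obtain ⟨j, h1, h2, h3⟩ := phi_spec hX hne hφ1 hx
    refine ContinuousAt.congr (f := fun _ => - a j) continuousAt_const ?_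
    filter_upwards [hN (j + 1)] with y hy
    have h1' : Pre X₀ j y := by
      obtain ⟨z, hz, e⟩ := h1
      exact ⟨z, hz, fun i hi => (hy i (by omega)).trans (e i hi)⟩
    have h2' : ¬ Pre X₀ (j + 1) y := by
      rintro ⟨z, hz, e⟩
      exact h2 ⟨z, hz, fun i hi => (hy i hi).symm.trans (e i hi)⟩
    exact le_antisymm (phi_lower hX hne hpos hdec hφ0 hφ1 h1') (phi_upper hX hne hdec hφ1 h2')

noncomputable def birk (φ : Cfg1 A → ℝ) (n : ℕ) (x : Cfg1 A) : ℝ :=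
  ∑ k ∈ Finset.range n, φ (shift1^[k] x)

lemma birk_add (φ : Cfg1 A → ℝ) {l m n : ℕ} (h : n = l + m) (x : Cfg1 A) :
    birk φ n x = birk φ l x + birk φ m (shift1^[l] x) := by
  subst h
  unfold birk
  rw [Finset.sum_range_add]
  congr 1
  refine Finset.sum_congr rfl fun k _ => ?_
  rw [← Function.iterate_add_apply, add_comm]

lemma block (hX : X₀ = { x : Cfg1 A | ∀ i : ℕ, (x i, x (i + 1)) ∈ T }) (hne : X₀.Nonempty)
    (ha : ∀ j : ℕ, 1 ≤ j → (1 : ℝ) / j ≤ a j) (hdec : Antitone a)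
    (hup : ∀ (x : Cfg1 A) (k : ℕ), ¬ Pre X₀ (k + 1) x → φ x ≤ - a k)
    {x : Cfg1 A} {n : ℕ} (hx : ¬ Pre X₀ n x) :
    ∃ l, 1 ≤ l ∧ l ≤ n ∧ (l = 1 ∨ Pre X₀ l x) ∧ birk φ l x ≤ - Real.log ((l : ℝ) + 1) := by
  obtain ⟨j, hjn, h1, h2⟩ := exists_break hne hx
  rcases Nat.eq_zero_or_pos j with rfl | hj
  · refine ⟨1, le_rfl, hjn, Or.inl rfl, ?_⟩
    have h3 := hup x 0 h2
    have h4 := ha 1 le_rfl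
    have h5 := hdec (zero_le_one (α := ℕ))
    have h6 := Real.log_le_sub_one_of_pos (show (0 : ℝ) < 1 + 1 by norm_num)
    simp [birk] at *
    linarith
  · refine ⟨j, hj, by omega, Or.inr h1, ?_⟩
    have h3 : ∀ i ∈ Finset.range j, φ (shift1^[i] x) ≤ -((((j - 1 - i : ℕ) : ℝ) + 1)⁻¹) := by
      intro i hi
      have hi := Finset.mem_range.1 hi
      have h4 : ¬ Pre X₀ (j - i + 1) (shift1^[i] x) := by
        intro h4
        apply h2
        have := pre_glue hX (pre_mono (show i + 1 ≤ j by omega) h1) h4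
        rwa [show i + (j - i) + 1 = j + 1 by omega] at this
      have h5 := hup _ _ h4
      have h6 := ha (j - i) (by omega)
      have h7 : ((j - 1 - i : ℕ) : ℝ) + 1 = ((j - i : ℕ) : ℝ) := by
        have : j - i = j - 1 - i + 1 := by omega
        rw [this]; push_cast; rfl
      rw [h7]
      rw [one_div] at h6
      linarith
    have h4 := Finset.sum_le_sum h3
    rw [Finset.sum_neg_distrib, Finset.sum_range_reflect (fun i : ℕ => ((i : ℝ) + 1)⁻¹) j] at h4
    have h5 := log_add_one_le_harmonic j
    have h6 : ((harmonic j : ℚ) : ℝ) = ∑ i ∈ Finset.range j, ((i : ℝ) + 1)⁻¹ := by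
      simp [harmonic]
    rw [h6] at h5
    push_cast at h5
    unfold birk
    linarith

noncomputable def Wt (φ : Cfg1 A → ℝ) (B n : ℕ) (x : Cfg1 A) : ℝ :=
  ⨆ y : {y : Cfg1 A // ∀ i < n, y i = x i}, Real.exp (B * birk φ n y.1)

lemma birk_nonpos (hφ : ∀ x, φ x ≤ 0) (n : ℕ) (x : Cfg1 A) : birk φ n x ≤ 0 :=
  Finset.sum_nonpos fun _ _ => hφ _

lemma exp_birk_le_one (hφ : ∀ x, φ x ≤ 0) (B n : ℕ) (x : Cfg1 A) :
    Real.exp (B * birk φ n x) ≤ 1 := by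
  rw [Real.exp_le_one_iff]
  exact mul_nonpos_of_nonneg_of_nonpos (by positivity) (birk_nonpos hφ n x)

lemma le_Wt (hφ : ∀ x, φ x ≤ 0) (B n : ℕ) {x y : Cfg1 A} (h : ∀ i < n, y i = x i) :
    Real.exp (B * birk φ n y) ≤ Wt φ B n x := by
  refine le_ciSup (f := fun y : {y : Cfg1 A // ∀ i < n, y i = x i} =>
    Real.exp (B * birk φ n y.1)) ⟨1, ?_⟩ ⟨y, h⟩
  rintro _ ⟨z, rfl⟩
  exact exp_birk_le_one hφ B n _

lemma Wt_pos (hφ : ∀ x, φ x ≤ 0) (B n : ℕ) (x : Cfg1 A) : 0 < Wt φ B n x :=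
  (Real.exp_pos _).trans_le (le_Wt hφ B n (x := x) (y := x) fun _ _ => rfl)

lemma Wt_rec (hX : X₀ = { x : Cfg1 A | ∀ i : ℕ, (x i, x (i + 1)) ∈ T }) (hne : X₀.Nonempty)
    (ha : ∀ j : ℕ, 1 ≤ j → (1 : ℝ) / j ≤ a j) (hdec : Antitone a)
    (hup : ∀ (x : Cfg1 A) (k : ℕ), ¬ Pre X₀ (k + 1) x → φ x ≤ - a k)
    (hφ : ∀ x, φ x ≤ 0) (B n : ℕ) (x : Cfg1 A) :
    Wt φ B n x ≤ ind (Pre X₀ n x) + ∑ l ∈ Finset.Icc 1 n,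
      (ind (l = 1 ∨ Pre X₀ l x) * ((((l : ℝ) + 1) ^ B)⁻¹ * Wt φ B (n - l) (shift1^[l] x))) := by
  have hnn : ∀ l ∈ Finset.Icc 1 n, 0 ≤
      (ind (l = 1 ∨ Pre X₀ l x) * ((((l : ℝ) + 1) ^ B)⁻¹ * Wt φ B (n - l) (shift1^[l] x))) :=
    fun l _ => mul_nonneg (ind_nonneg _) (mul_nonneg (by positivity) (Wt_pos hφ _ _ _).le)
  have : Nonempty {y : Cfg1 A // ∀ i < n, y i = x i} := ⟨⟨x, fun _ _ => rfl⟩⟩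
  refine ciSup_le ?_
  rintro ⟨y, hy⟩
  simp only
  by_cases hp : Pre X₀ n x
  · rw [ind_true hp]
    have := exp_birk_le_one hφ B n y
    have := Finset.sum_nonneg hnn
    linarith
  rw [ind_false hp, zero_add]
  have hp' : ¬ Pre X₀ n y := fun ⟨z, hz, e⟩ =>
    hp ⟨z, hz, fun i hi => (hy i hi).symm.trans (e i hi)⟩
  obtain ⟨l, hl1, hln, hl, hb⟩ := block hX hne ha hdec hup hp'
  refine le_trans ?_ (Finset.single_le_sum hnn (Finset.mem_Icc.2 ⟨hl1, hln⟩))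
  have hl' : l = 1 ∨ Pre X₀ l x := by
    refine hl.imp id ?_
    rintro ⟨z, hz, e⟩
    exact ⟨z, hz, fun i hi => (hy i (by omega)).symm.trans (e i hi)⟩
  rw [ind_true hl', one_mul, birk_add φ (show n = l + (n - l) by omega), mul_add, Real.exp_add]
  have hW : Real.exp (B * birk φ (n - l) (shift1^[l] y)) ≤ Wt φ B (n - l) (shift1^[l] x) := by
    apply le_Wt hφ
    intro i hi
    rw [shift1_iter, shift1_iter]
    exact hy _ (by omega)
  have hE : Real.exp (B * birk φ l y) ≤ (((l : ℝ) + 1) ^ B)⁻¹ := by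
    have hl0 : (0 : ℝ) < (l : ℝ) + 1 := by positivity
    calc Real.exp (B * birk φ l y) ≤ Real.exp (B * (- Real.log ((l : ℝ) + 1))) := by gcongr
      _ = _ := by rw [Real.exp_nat_mul, Real.exp_neg, Real.exp_log hl0, inv_pow]
  exact mul_le_mul hE hW (Real.exp_pos _).le (by positivity)

lemma sum_inv_sq_le (n : ℕ) :
    ∑ l ∈ Finset.Icc 1 n, (((l : ℝ) + 1) ^ 2)⁻¹ ≤ 1 - ((n : ℝ) + 1)⁻¹ := by
  induction n with
  | zero => simp
  | succ n ih =>
    rw [Finset.sum_Icc_succ_top (by omega)]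
    have h : ((((n + 1 : ℕ) : ℝ) + 1) ^ 2)⁻¹ ≤ ((n : ℝ) + 1)⁻¹ - (((n + 1 : ℕ) : ℝ) + 1)⁻¹ := by
      push_cast
      rw [inv_sub_inv (by positivity) (by positivity), inv_eq_one_div,
        div_le_div_iff₀ (by positivity) (by positivity)]
      nlinarith
    linarith

lemma part_bound (hX : X₀ = { x : Cfg1 A | ∀ i : ℕ, (x i, x (i + 1)) ∈ T }) (hne : X₀.Nonempty)
    (ha : ∀ j : ℕ, 1 ≤ j → (1 : ℝ) / j ≤ a j) (hdec : Antitone a)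
    (hup : ∀ (x : Cfg1 A) (k : ℕ), ¬ Pre X₀ (k + 1) x → φ x ≤ - a k)
    (hφ : ∀ x, φ x ≤ 0) :
    ∃ (B D : ℕ) (C : ℝ), 0 < C ∧ ∀ n : ℕ, wsum n (Wt φ B n) ≤
      C * (n + 1 : ℝ) ^ D * Real.exp (topEnt1 X₀) ^ n := by
  obtain ⟨C, D, hC, hcnt⟩ := cnt_bound hX hne
  set L := Real.exp (topEnt1 X₀) with hL
  have hL1 : 1 ≤ L := Real.one_le_exp (topEnt_nonneg hne)
  have hA : (1 : ℝ) ≤ Fintype.card A := by exact_mod_cast Fintype.card_pos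
  set cA : ℝ := (Fintype.card A : ℝ) with hcA
  obtain ⟨t, ht⟩ : ∃ t : ℕ, 2 * (cA * C) < 2 ^ t := pow_unbounded_of_one_lt _ (by norm_num)
  refine ⟨D + 2 + t, D, 2 * C, by linarith, fun n => ?_⟩
  induction n using Nat.strong_induction_on with
  | _ n ih =>
  have hbc : ∀ l : ℕ, wsum l (fun x => ind (l = 1 ∨ Pre X₀ l x)) ≤ cA * cnt X₀ l := by
    intro l
    by_cases hl : l = 1
    · subst hl
      have h1 : wsum 1 (fun x => ind (1 = 1 ∨ Pre X₀ 1 x)) ≤ cA := by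
        refine (wsum_mono (g := fun _ => 1) fun _ => ind_le_one _).trans ?_
        rw [wsum_one, pow_one]
      refine h1.trans ?_
      exact le_mul_of_one_le_right (by positivity) (cnt_ge_one hne 1)
    · simp only [hl, false_or]
      exact le_mul_of_one_le_left (cnt_nonneg l) hA
  have h1 : wsum n (Wt φ (D + 2 + t) n) ≤ cnt X₀ n + ∑ l ∈ Finset.Icc 1 n,
      wsum l (fun x => ind (l = 1 ∨ Pre X₀ l x)) *
        ((((l : ℝ) + 1) ^ (D + 2 + t))⁻¹ * wsum (n - l) (Wt φ (D + 2 + t) (n - l))) := by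
    refine (wsum_mono (Wt_rec hX hne ha hdec hup hφ _ n)).trans ?_
    have e0 : ∀ f g : Cfg1 A → ℝ, wsum n (fun x => f x + g x) = wsum n f + wsum n g :=
      fun f g => Finset.sum_add_distrib
    rw [e0, wsum_finset]
    refine le_of_eq ?_
    congr 1
    refine Finset.sum_congr rfl fun l hl => ?_
    have hl := Finset.mem_Icc.1 hl
    have hdep : Dep l (fun x : Cfg1 A => ind (l = 1 ∨ Pre X₀ l x)) := by
      intro x y h
      by_cases hl : l = 1
      · simp [hl]
      · simpa [hl] using dep_pre X₀ l x y h
    have e1 := wsum_mul (n := n) (l := l) (m := n - l) (by omega)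
      (fun z => (((l : ℝ) + 1) ^ (D + 2 + t))⁻¹ * Wt φ (D + 2 + t) (n - l) z) hdep
    rw [e1]
    congr 1
    exact (Finset.mul_sum _ _ _).symm
  have h2 : ∀ l ∈ Finset.Icc 1 n, wsum l (fun x => ind (l = 1 ∨ Pre X₀ l x)) *
        ((((l : ℝ) + 1) ^ (D + 2 + t))⁻¹ * wsum (n - l) (Wt φ (D + 2 + t) (n - l))) ≤
      (C * (n + 1 : ℝ) ^ D * L ^ n) * (((l : ℝ) + 1) ^ 2)⁻¹ := by
    intro l hl
    have hl := Finset.mem_Icc.1 hl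
    have i1 := ih (n - l) (by omega)
    have i2 : wsum (n - l) (Wt φ (D + 2 + t) (n - l)) ≤ 2 * C * (n + 1 : ℝ) ^ D * L ^ (n - l) := by
      refine i1.trans ?_
      gcongr
      omega
    have i3 : wsum l (fun x => ind (l = 1 ∨ Pre X₀ l x)) ≤ cA * (C * (l + 1 : ℝ) ^ D * L ^ l) :=
      (hbc l).trans (by gcongr; exact hcnt l)
    have i4 : 2 * (cA * C) * (((l : ℝ) + 1) ^ t)⁻¹ ≤ 1 := by
      rw [mul_inv_le_iff₀ (by positivity), one_mul]
      refine ht.le.trans ?_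
      gcongr
      have : (1 : ℝ) ≤ l := by exact_mod_cast hl.1
      linarith
    have hl0 : ((l : ℝ) + 1) ≠ 0 := by positivity
    calc _ ≤ cA * (C * (l + 1 : ℝ) ^ D * L ^ l) * ((((l : ℝ) + 1) ^ (D + 2 + t))⁻¹ *
            (2 * C * (n + 1 : ℝ) ^ D * L ^ (n - l))) := by
          have := wsum_nonneg (n := n - l) (f := Wt φ (D + 2 + t) (n - l))
            (fun x => (Wt_pos hφ _ _ x).le)
          gcongr
      _ = (2 * (cA * C) * (((l : ℝ) + 1) ^ t)⁻¹) * ((C * (n + 1 : ℝ) ^ D * (L ^ l * L ^ (n - l))) *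
            (((l : ℝ) + 1) ^ 2)⁻¹) := by
          rw [pow_add, pow_add, mul_inv, mul_inv]
          field_simp
      _ ≤ 1 * ((C * (n + 1 : ℝ) ^ D * (L ^ l * L ^ (n - l))) * (((l : ℝ) + 1) ^ 2)⁻¹) := by
          gcongr
      _ = _ := by rw [one_mul, ← pow_add, show l + (n - l) = n by omega]
  have h3 := Finset.sum_le_sum h2
  rw [← Finset.mul_sum] at h3
  have h4 : ∑ l ∈ Finset.Icc 1 n, (((l : ℝ) + 1) ^ 2)⁻¹ ≤ 1 := by
    have := sum_inv_sq_le n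
    have : 0 ≤ ((n : ℝ) + 1)⁻¹ := by positivity
    linarith
  have h5 : (C * (n + 1 : ℝ) ^ D * L ^ n) * ∑ l ∈ Finset.Icc 1 n, (((l : ℝ) + 1) ^ 2)⁻¹ ≤
      C * (n + 1 : ℝ) ^ D * L ^ n := mul_le_of_le_one_right (by positivity) h4
  have h6 := hcnt n
  linarith

end Phi

set_option linter.unusedSectionVars false
section Ent

lemma gibbs {ι : Type*} [Fintype ι] (p W : ι → ℝ) (hp : ∀ i, 0 ≤ p i) (hp1 : ∑ i, p i = 1)
    (hW : ∀ i, 0 ≤ W i) (h0 : ∀ i, W i = 0 → p i = 0) (hZ : 0 < ∑ i, W i) :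
    ∑ i, Real.negMulLog (p i) + ∑ i, p i * Real.log (W i) ≤ Real.log (∑ i, W i) := by
  set Z := ∑ i, W i with hZd
  have key : ∀ i, Real.negMulLog (p i) + p i * Real.log (W i) ≤
      p i * Real.log Z + (W i / Z - p i) := by
    intro i
    rcases (hp i).eq_or_lt with h | h
    · rw [← h]; simp; exact div_nonneg (hW i) hZ.le
    have hWi : 0 < W i := (hW i).lt_of_ne fun hh => h.ne' (h0 i hh.symm)
    have h1 := Real.log_le_sub_one_of_pos (show 0 < W i / (p i * Z) by positivity)
    rw [Real.log_div hWi.ne' (by positivity), Real.log_mul h.ne' hZ.ne'] at h1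
    have h2 := mul_le_mul_of_nonneg_left h1 h.le
    have h3 : p i * (W i / (p i * Z) - 1) = W i / Z - p i := by field_simp
    rw [h3] at h2
    unfold Real.negMulLog
    linarith
  have h := Finset.sum_le_sum (fun i (_ : i ∈ Finset.univ) => key i)
  rw [Finset.sum_add_distrib, Finset.sum_add_distrib, Finset.sum_sub_distrib, ← Finset.sum_mul,
    hp1, ← Finset.sum_div, ← hZd, div_self hZ.ne'] at h
  linarith

variable {A : Type} [Fintype A] [Nonempty A] [TopologicalSpace A] [DiscreteTopology A]
  [MeasurableSpace A] [BorelSpace A]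

def res (n : ℕ) (x : Cfg1 A) : Fin n → A := fun i => x i

lemma cyl_eq (n : ℕ) (w : Fin n → A) : cyl1 n w = res n ⁻¹' {w} := by
  ext x
  simp only [cyl1, Set.mem_preimage, Set.mem_singleton_iff, funext_iff, res]
  rfl

lemma mem_cyl {n : ℕ} {w : Fin n → A} {x : Cfg1 A} : x ∈ cyl1 n w ↔ ∀ i : Fin n, x i = w i :=
  Iff.rfl

lemma cont_res (n : ℕ) : Continuous (res n : Cfg1 A → _) :=
  continuous_pi fun i => continuous_apply _

lemma cont_shift : Continuous (shift1 : Cfg1 A → _) :=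
  continuous_pi fun i => continuous_apply _

lemma meas_shift : Measurable (shift1 : Cfg1 A → _) := cont_shift.measurable

lemma meas_iter (k : ℕ) : Measurable (shift1^[k] : Cfg1 A → _) := meas_shift.iterate k

lemma meas_res (n : ℕ) : Measurable (res n : Cfg1 A → _) := (cont_res n).measurable

lemma meas_cyl (n : ℕ) (w : Fin n → A) : MeasurableSet (cyl1 n w) := by
  rw [cyl_eq]; exact meas_res n (MeasurableSet.singleton w)

lemma integrable_cont {f : Cfg1 A → ℝ} (hf : Continuous f) (μ : Measure (Cfg1 A))
    [IsFiniteMeasure μ] : Integrable f μ := by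
  have : Integrable (fun x => BoundedContinuousFunction.mkOfCompact ⟨f, hf⟩ x) μ :=
    BoundedContinuousFunction.integrable μ _
  exact this

lemma integral_res (n : ℕ) (c : (Fin n → A) → ℝ) (μ : Measure (Cfg1 A)) [IsFiniteMeasure μ] :
    ∫ x, c (res n x) ∂μ = ∑ w, μ.real (cyl1 n w) * c w := by
  have h := integral_map (μ := μ) (φ := res n) (meas_res n).aemeasurable (f := c)
    (measurable_of_finite c).aestronglyMeasurable
  rw [← h, integral_fintype (Integrable.of_finite)]
  refine Finset.sum_congr rfl fun w _ => ?_
  rw [map_measureReal_apply (meas_res n) (MeasurableSet.singleton w), cyl_eq, smul_eq_mul]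

lemma sum_cyl (n : ℕ) (μ : Measure (Cfg1 A)) [IsFiniteMeasure μ] :
    ∑ w, μ.real (cyl1 n w) = μ.real Set.univ := by
  have h := integral_res n (fun _ => (1 : ℝ)) μ
  simpa using h.symm

noncomputable def HH (n : ℕ) (μ : Measure (Cfg1 A)) : ℝ :=
  ∑ w : Fin n → A, Real.negMulLog (μ.real (cyl1 n w))

lemma entropy_eq (μ : Measure (Cfg1 A)) :
    entropy1 μ = ⨅ n : {n : ℕ // 1 ≤ n}, (n.1 : ℝ)⁻¹ * HH n.1 μ := rfl

lemma HH_nonneg (n : ℕ) (μ : Measure (Cfg1 A)) [IsProbabilityMeasure μ] : 0 ≤ HH n μ :=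
  Finset.sum_nonneg fun _ _ => Real.negMulLog_nonneg measureReal_nonneg measureReal_le_one

lemma entropy_le {n : ℕ} (hn : 1 ≤ n) (μ : Measure (Cfg1 A)) [IsProbabilityMeasure μ] :
    entropy1 μ ≤ (n : ℝ)⁻¹ * HH n μ := by
  rw [entropy_eq]
  refine ciInf_le (f := fun n : {n : ℕ // 1 ≤ n} => (n.1 : ℝ)⁻¹ * HH n.1 μ) ⟨0, ?_⟩ ⟨n, hn⟩
  rintro _ ⟨m, rfl⟩
  exact mul_nonneg (by positivity) (HH_nonneg _ _)

lemma le_entropy {c : ℝ} {μ : Measure (Cfg1 A)} (h : ∀ n : ℕ, 1 ≤ n → n * c ≤ HH n μ) :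
    c ≤ entropy1 μ := by
  rw [entropy_eq]
  have : Nonempty {n : ℕ // 1 ≤ n} := ⟨⟨1, le_rfl⟩⟩
  refine le_ciInf ?_
  rintro ⟨n, hn⟩
  have hn' : (0 : ℝ) < n := by exact_mod_cast hn
  rw [← div_eq_inv_mul, le_div_iff₀ hn', mul_comm]
  exact h n hn

lemma HH_gibbs (n : ℕ) (μ : Measure (Cfg1 A)) [IsProbabilityMeasure μ] (W : (Fin n → A) → ℝ)
    (hW : ∀ w, 0 < W w) {ψ : Cfg1 A → ℝ} (hψ : Integrable ψ μ)
    (h : ∀ x, ψ x ≤ Real.log (W (res n x))) :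
    HH n μ + ∫ x, ψ x ∂μ ≤ Real.log (∑ w, W w) := by
  have h1 : ∫ x, ψ x ∂μ ≤ ∫ x, Real.log (W (res n x)) ∂μ := by
    refine integral_mono hψ ?_ h
    have : Continuous fun x : Cfg1 A => Real.log (W (res n x)) :=
      (continuous_of_discreteTopology (f := fun w => Real.log (W w))).comp (cont_res n)
    exact integrable_cont this μ
  rw [integral_res n (fun w => Real.log (W w))] at h1
  have h2 := gibbs (fun w => μ.real (cyl1 n w)) W (fun _ => measureReal_nonneg)
    (by rw [sum_cyl]; simp) (fun w => (hW w).le) (fun w hw => absurd hw (hW w).ne')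
    (Finset.sum_pos (fun w _ => hW w) Finset.univ_nonempty)
  unfold HH
  linarith

lemma HH_le (n : ℕ) (μ : Measure (Cfg1 A)) [IsProbabilityMeasure μ] :
    HH n μ ≤ n * Real.log (Fintype.card A) := by
  have h := HH_gibbs n μ (fun _ => 1) (fun _ => one_pos) (ψ := fun _ => 0) (integrable_const _)
    (by simp)
  simpa using h

lemma le_HH {n : ℕ} {K : ℝ} (hK : 0 < K) (μ : Measure (Cfg1 A)) [IsProbabilityMeasure μ]
    (h : ∀ w, μ.real (cyl1 n w) ≤ K⁻¹) : Real.log K ≤ HH n μ := by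
  have h1 : ∀ w, μ.real (cyl1 n w) * Real.log K ≤ Real.negMulLog (μ.real (cyl1 n w)) := by
    intro w
    rcases (measureReal_nonneg (μ := μ) (s := cyl1 n w)).eq_or_lt with h0 | h0
    · rw [← h0]; simp
    have := Real.log_le_log h0 (h w)
    rw [Real.log_inv] at this
    unfold Real.negMulLog
    nlinarith
  have h2 := Finset.sum_le_sum fun w (_ : w ∈ Finset.univ) => h1 w
  rw [← Finset.sum_mul, sum_cyl] at h2
  simpa [HH] using h2

lemma cyl_append (n m : ℕ) (u : Fin n → A) (v : Fin m → A) :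
    cyl1 (n + m) (Fin.appendEquiv n m (u, v)) = cyl1 n u ∩ shift1^[n] ⁻¹' cyl1 m v := by
  ext x
  simp only [Set.mem_inter_iff, Set.mem_preimage, mem_cyl, shift1_iter]
  change (∀ i, x (i : Fin (n + m)) = Fin.append u v i) ↔ _
  constructor
  · intro h
    constructor
    · intro i
      have := h (Fin.castAdd m i)
      rwa [Fin.append_left] at this
    · intro i
      have := h (Fin.natAdd n i)
      rw [Fin.append_right] at this
      rw [← this]; congr 1; simp [add_comm]
  · rintro ⟨h1, h2⟩ i
    refine Fin.addCases (fun i => ?_) (fun i => ?_) i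
    · rw [Fin.append_left, ← h1 i]; rfl
    · rw [Fin.append_right, ← h2 i]; congr 1; simp [add_comm]

lemma HH_add (n m : ℕ) (μ : Measure (Cfg1 A)) [IsProbabilityMeasure μ] :
    HH (n + m) μ ≤ HH n μ + HH m (μ.map shift1^[n]) := by
  set p : (Fin n → A) → ℝ := fun u => μ.real (cyl1 n u) with hp
  set q : (Fin m → A) → ℝ := fun v => (μ.map shift1^[n]).real (cyl1 m v) with hq
  set r : (Fin n → A) × (Fin m → A) → ℝ := fun uv => μ.real (cyl1 n uv.1 ∩ shift1^[n] ⁻¹' cyl1 m uv.2)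
    with hr
  have hprob : IsProbabilityMeasure (μ.map shift1^[n]) :=
    Measure.isProbabilityMeasure_map (meas_iter n).aemeasurable
  have hpre : ∀ v, MeasurableSet (shift1^[n] ⁻¹' cyl1 m v : Set (Cfg1 A)) := fun v =>
    meas_iter n (meas_cyl m v)
  have hqv : ∀ v, q v = μ.real (shift1^[n] ⁻¹' cyl1 m v) := fun v => by
    rw [hq]; simp only; rw [map_measureReal_apply (meas_iter n) (meas_cyl m v)]
  have hp1 : ∀ u, ∑ v, r (u, v) = p u := by
    intro u
    have h := sum_cyl m ((μ.restrict (cyl1 n u)).map shift1^[n])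
    rw [map_measureReal_apply (meas_iter n) MeasurableSet.univ] at h
    simp only [Set.preimage_univ, measureReal_restrict_apply_univ] at h
    rw [hp]; simp only
    rw [← h]
    refine Finset.sum_congr rfl fun v _ => ?_
    rw [map_measureReal_apply (meas_iter n) (meas_cyl m v), measureReal_restrict_apply (hpre v),
      Set.inter_comm]
  have hq1 : ∀ v, ∑ u, r (u, v) = q v := by
    intro v
    have h := sum_cyl n (μ.restrict (shift1^[n] ⁻¹' cyl1 m v))
    simp only [measureReal_restrict_apply_univ] at h
    rw [hqv, ← h]
    refine Finset.sum_congr rfl fun u _ => ?_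
    rw [measureReal_restrict_apply (meas_cyl n u)]
  have hrn : ∀ x, 0 ≤ r x := fun x => measureReal_nonneg
  have hpn : ∀ x, 0 ≤ p x := fun x => measureReal_nonneg
  have hqn : ∀ x, 0 ≤ q x := fun x => measureReal_nonneg
  have hps : ∑ u, p u = 1 := by rw [hp, sum_cyl]; simp
  have hqs : ∑ v, q v = 1 := by rw [hq, sum_cyl]; simp
  have hrp : ∀ u v, p u = 0 → r (u, v) = 0 := by
    intro u v h
    have := Finset.single_le_sum (fun v _ => hrn (u, v)) (Finset.mem_univ v)
    rw [hp1, h] at this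
    exact le_antisymm this (hrn _)
  have hrq : ∀ u v, q v = 0 → r (u, v) = 0 := by
    intro u v h
    have := Finset.single_le_sum (fun u _ => hrn (u, v)) (Finset.mem_univ u)
    rw [hq1, h] at this
    exact le_antisymm this (hrn _)
  have hW1 : ∑ x : (Fin n → A) × (Fin m → A), p x.1 * q x.2 = 1 := by
    rw [Fintype.sum_prod_type]
    simp only [← Finset.mul_sum, hqs, mul_one, hps]
  have hg := gibbs r (fun x => p x.1 * q x.2) hrn
    (by rw [Fintype.sum_prod_type]; simp only [hp1, hps])
    (fun x => mul_nonneg (hpn _) (hqn _))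
    (fun ⟨u, v⟩ hx => by
      rcases mul_eq_zero.1 hx with h | h
      · exact hrp u v h
      · exact hrq u v h) (by rw [hW1]; exact one_pos)
  rw [hW1, Real.log_one] at hg
  have e1 : HH (n + m) μ = ∑ x, Real.negMulLog (r x) := by
    unfold HH
    symm
    apply Fintype.sum_equiv (Fin.appendEquiv n m)
    rintro ⟨u, v⟩
    rw [cyl_append]
  have e2 : ∑ x : (Fin n → A) × (Fin m → A), r x * Real.log (p x.1 * q x.2) =
      - HH n μ - HH m (μ.map shift1^[n]) := by
    have e3 : ∀ x : (Fin n → A) × (Fin m → A), r x * Real.log (p x.1 * q x.2) =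
        r x * Real.log (p x.1) + r x * Real.log (q x.2) := by
      rintro ⟨u, v⟩
      by_cases h1 : p u = 0
      · rw [hrp u v h1]; simp
      by_cases h2 : q v = 0
      · rw [hrq u v h2]; simp
      simp only
      rw [Real.log_mul h1 h2]; ring
    simp only [e3]
    rw [Finset.sum_add_distrib]
    have e4 : ∑ x : (Fin n → A) × (Fin m → A), r x * Real.log (p x.1) = - HH n μ := by
      rw [Fintype.sum_prod_type]
      simp only [← Finset.sum_mul, hp1]
      unfold HH Real.negMulLog
      rw [← Finset.sum_neg_distrib]
      refine Finset.sum_congr rfl fun u _ => ?_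
      simp [hp]
    have e5 : ∑ x : (Fin n → A) × (Fin m → A), r x * Real.log (q x.2) =
        - HH m (μ.map shift1^[n]) := by
      rw [Fintype.sum_prod_type_right]
      simp only [← Finset.sum_mul, hq1]
      unfold HH Real.negMulLog
      rw [← Finset.sum_neg_distrib]
      refine Finset.sum_congr rfl fun u _ => ?_
      simp [hq]
    rw [e4, e5]; ring
  rw [← e1, e2] at hg
  linarith

lemma HH_blocks (m q : ℕ) (μ : Measure (Cfg1 A)) [IsProbabilityMeasure μ] :
    HH (m * q) μ ≤ ∑ k ∈ Finset.range q, HH m (μ.map shift1^[m * k]) := by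
  induction q with
  | zero => simpa using HH_le 0 μ
  | succ q ih =>
    rw [Finset.sum_range_succ]
    exact (HH_add (m * q) m μ).trans (by gcongr)

lemma HH_blocks' (r m q : ℕ) (μ : Measure (Cfg1 A)) [IsProbabilityMeasure μ] :
    HH (r + m * q) μ ≤ r * Real.log (Fintype.card A) +
      ∑ k ∈ Finset.range q, HH m (μ.map shift1^[m * k + r]) := by
  have hprob : IsProbabilityMeasure (μ.map shift1^[r]) :=
    Measure.isProbabilityMeasure_map (meas_iter r).aemeasurable
  refine (HH_add r (m * q) μ).trans (add_le_add (HH_le r μ) ?_)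
  refine (HH_blocks m q _).trans (le_of_eq (Finset.sum_congr rfl fun k _ => ?_))
  rw [Measure.map_map (meas_iter _) (meas_iter _), ← Function.iterate_add]

lemma sum_range_blocks (f : ℕ → ℝ) (m q : ℕ) :
    ∑ r ∈ Finset.range m, ∑ k ∈ Finset.range q, f (m * k + r) = ∑ i ∈ Finset.range (m * q), f i := by
  rw [Finset.sum_comm]
  induction q with
  | zero => simp
  | succ q ih => rw [Finset.sum_range_succ, ih, mul_add, mul_one, Finset.sum_range_add]

lemma HH_tendsto {ι : Type*} {F : Filter ι} {μs : ι → Measure (Cfg1 A)} {μ : Measure (Cfg1 A)}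
    (hμs : ∀ i, IsProbabilityMeasure (μs i)) [IsProbabilityMeasure μ]
    (h : ∀ f : Cfg1 A → ℝ, Continuous f →
      Tendsto (fun k => ∫ x, f x ∂(μs k)) F (𝓝 (∫ x, f x ∂μ))) (n : ℕ) :
    Tendsto (fun k => HH n (μs k)) F (𝓝 (HH n μ)) := by
  unfold HH
  refine tendsto_finsetSum _ fun w _ => ?_
  refine (Real.continuous_negMulLog.tendsto _).comp ?_
  have h1 := h (fun x => (fun w' => if w' = w then (1 : ℝ) else 0) (res n x))
    ((continuous_of_discreteTopology (f := fun w' : Fin n → A =>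
      if w' = w then (1 : ℝ) else 0)).comp (cont_res n))
  have h2 : ∀ (ν : Measure (Cfg1 A)) [IsProbabilityMeasure ν],
      ∫ x, (fun w' => if w' = w then (1 : ℝ) else 0) (res n x) ∂ν = ν.real (cyl1 n w) := by
    intro ν _
    rw [integral_res n (fun w' => if w' = w then (1 : ℝ) else 0) ν]
    simp
  rw [h2 μ] at h1
  refine h1.congr fun k => ?_
  have := hμs k
  rw [h2 (μs k)]

end Ent

set_option linter.unusedSectionVars false
section Exist

variable {A : Type} [Fintype A] [Nonempty A] [TopologicalSpace A] [DiscreteTopology A]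
  [MeasurableSpace A] [BorelSpace A]

/-- uniform average of measures -/
noncomputable def avgM {ι : Type*} (s : Finset ι) (ν : ι → Measure (Cfg1 A)) : Measure (Cfg1 A) :=
  ((s.card : ℝ≥0∞)⁻¹) • ∑ i ∈ s, ν i

lemma avgM_prob {ι : Type*} {s : Finset ι} (hs : s.Nonempty) {ν : ι → Measure (Cfg1 A)}
    (h : ∀ i, IsProbabilityMeasure (ν i)) : IsProbabilityMeasure (avgM s ν) := by
  constructor
  simp only [avgM, Measure.smul_apply, Measure.coe_finset_sum, Finset.sum_apply, measure_univ,
    Finset.sum_const, smul_eq_mul, nsmul_eq_mul, mul_one]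
  exact ENNReal.inv_mul_cancel (by simpa using hs.ne_empty) (by simp)

lemma avgM_integral {ι : Type*} {s : Finset ι} {ν : ι → Measure (Cfg1 A)}
    (h : ∀ i, IsProbabilityMeasure (ν i)) {f : Cfg1 A → ℝ} (hf : Continuous f) :
    ∫ x, f x ∂(avgM s ν) = (s.card : ℝ)⁻¹ * ∑ i ∈ s, ∫ x, f x ∂(ν i) := by
  unfold avgM
  rw [integral_smul_measure, integral_finset_sum_measure (fun i _ => integrable_cont hf _)]
  simp

lemma avgM_real {ι : Type*} {s : Finset ι} {ν : ι → Measure (Cfg1 A)}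
    (h : ∀ i, IsProbabilityMeasure (ν i)) (t : Set (Cfg1 A)) :
    (avgM s ν).real t = (s.card : ℝ)⁻¹ * ∑ i ∈ s, (ν i).real t := by
  unfold avgM
  rw [measureReal_ennreal_smul_apply]
  congr 1
  · simp
  · rw [measureReal_def, Measure.coe_finset_sum, Finset.sum_apply, ENNReal.toReal_sum]
    · rfl
    · intro i _; exact measure_ne_top _ _

lemma HH_concave {ι : Type*} {s : Finset ι} (hs : s.Nonempty) {ν : ι → Measure (Cfg1 A)}
    (h : ∀ i, IsProbabilityMeasure (ν i)) (n : ℕ) :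
    ∑ i ∈ s, HH n (ν i) ≤ s.card * HH n (avgM s ν) := by
  have hc : (0 : ℝ) < s.card := by exact_mod_cast hs.card_pos
  unfold HH
  rw [Finset.sum_comm, Finset.mul_sum]
  refine Finset.sum_le_sum fun w _ => ?_
  have := Real.concaveOn_negMulLog.le_map_sum (t := s) (w := fun _ => (s.card : ℝ)⁻¹)
    (p := fun i => (ν i).real (cyl1 n w)) (fun _ _ => by positivity)
    (by simp [hc.ne']) (fun i _ => measureReal_nonneg)
  rw [avgM_real h, ← inv_mul_le_iff₀ hc, Finset.mul_sum, Finset.mul_sum]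
  simpa using this

lemma exists_nu (Y : Set (Cfg1 A)) (hne : Y.Nonempty) (hinv : ∀ x ∈ Y, shift1 x ∈ Y) (N : ℕ) :
    ∃ ν : Measure (Cfg1 A), IsProbabilityMeasure ν ∧
      (∀ n, N ≤ n → ∀ w, ν.real (cyl1 n w) ≤ (cnt Y N)⁻¹) ∧
      ∀ f : Cfg1 A → ℝ, Continuous f → (∀ x ∈ Y, f x = 0) → ∫ x, f x ∂ν = 0 := by
  have hpt : ∀ w : lang1 Y N, ∃ x ∈ Y, ∀ i : Fin N, x i = w.1 i := fun w => w.2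
  choose pt hpY hpe using hpt
  have hnel : Nonempty (lang1 Y N) := by
    obtain ⟨x, hx⟩ := hne
    exact ⟨⟨fun i => x i, x, hx, fun i => rfl⟩⟩
  have hpr : ∀ w : lang1 Y N, IsProbabilityMeasure (Measure.dirac (pt w)) := fun w => inferInstance
  have hcard : ((Finset.univ : Finset (lang1 Y N)).card : ℝ) = cnt Y N := by
    rw [cnt_eq, Set.ncard_eq_toFinset_card', Finset.card_univ, Set.toFinset_card]
  have hpos : 0 < cnt Y N := by linarith [cnt_ge_one hne N]
  refine ⟨avgM (Finset.univ : Finset (lang1 Y N)) fun w => Measure.dirac (pt w),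
    avgM_prob Finset.univ_nonempty hpr, ?_, ?_⟩
  · intro n hn w
    rw [avgM_real hpr, hcard]
    have : ∑ i : lang1 Y N, (Measure.dirac (pt i)).real (cyl1 n w) ≤ 1 := by
      by_cases hex : ∃ i : lang1 Y N, pt i ∈ cyl1 n w
      · obtain ⟨i, hi⟩ := hex
        rw [Finset.sum_eq_single i]
        · exact measureReal_le_one
        · intro j _ hji
          rw [measureReal_def, Measure.dirac_apply' _ (meas_cyl n w)]
          have : pt j ∉ cyl1 n w := by
            intro hj
            apply hji
            ext k
            rw [← hpe i k, ← hpe j k]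
            rw [mem_cyl] at hi hj
            have h1 := hi ⟨k, by omega⟩
            have h2 := hj ⟨k, by omega⟩
            exact h2.trans h1.symm
          simp [this]
        · intro h; exact absurd (Finset.mem_univ _) h
      · push Not at hex
        rw [Finset.sum_eq_zero]
        · norm_num
        · intro j _
          rw [measureReal_def, Measure.dirac_apply' _ (meas_cyl n w)]
          simp [hex j]
    calc _ ≤ (cnt Y N)⁻¹ * 1 := by gcongr
      _ = _ := mul_one _
  · intro f hf h0
    rw [avgM_integral hpr hf]
    simp only [integral_dirac]
    rw [Finset.sum_eq_zero (fun w _ => h0 _ (hpY w)), mul_zero]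

lemma log_cnt_ge (Y : Set (Cfg1 A)) (hne : Y.Nonempty) {N : ℕ} (hN : 1 ≤ N) :
    N * topEnt1 Y ≤ Real.log (cnt Y N) := by
  have h : topEnt1 Y ≤ (N : ℝ)⁻¹ * Real.log ((lang1 Y N).ncard) := by
    unfold topEnt1
    refine ciInf_le (f := fun n : {n : ℕ // 1 ≤ n} => (n.1 : ℝ)⁻¹ * Real.log ((lang1 Y n.1).ncard))
      ⟨0, ?_⟩ ⟨N, hN⟩
    rintro _ ⟨m, rfl⟩
    simp only
    rw [← cnt_eq]
    exact mul_nonneg (by positivity) (Real.log_nonneg (cnt_ge_one hne _))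
  have hN' : (0 : ℝ) < N := by exact_mod_cast hN
  rw [← cnt_eq, ← div_eq_inv_mul, le_div_iff₀ hN'] at h
  linarith

lemma map_prob (ν : Measure (Cfg1 A)) [IsProbabilityMeasure ν] (i : ℕ) :
    IsProbabilityMeasure (ν.map shift1^[i]) :=
  Measure.isProbabilityMeasure_map (meas_iter i).aemeasurable

lemma cont_iter (k : ℕ) : Continuous (shift1^[k] : Cfg1 A → _) := cont_shift.iterate k

lemma int_map (ν : Measure (Cfg1 A)) {f : Cfg1 A → ℝ} (hf : Continuous f) (i : ℕ) :
    ∫ x, f x ∂(ν.map shift1^[i]) = ∫ x, f (shift1^[i] x) ∂ν :=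
  integral_map (meas_iter i).aemeasurable hf.aestronglyMeasurable

lemma exists_muN (Y : Set (Cfg1 A)) (hne : Y.Nonempty) (hinv : ∀ x ∈ Y, shift1 x ∈ Y)
    {N : ℕ} (hN : 1 ≤ N) :
    ∃ μ : Measure (Cfg1 A), IsProbabilityMeasure μ ∧
      (∀ f : Cfg1 A → ℝ, Continuous f → (∀ x ∈ Y, f x = 0) → ∫ x, f x ∂μ = 0) ∧
      (∀ f : Cfg1 A → ℝ, Continuous f → ∀ M, (∀ x, |f x| ≤ M) →
        |∫ x, f (shift1 x) ∂μ - ∫ x, f x ∂μ| ≤ (N : ℝ)⁻¹ * (2 * M)) ∧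
      ∀ m q, N = m * q → m * topEnt1 Y ≤ (N : ℝ)⁻¹ * (m * (m * Real.log (Fintype.card A))) + HH m μ := by
  obtain ⟨ν, hν, hcyl, hint⟩ := exists_nu Y hne hinv N
  have hpr := fun i => map_prob ν i
  have hN' : (0 : ℝ) < N := by exact_mod_cast hN
  have hne' : (Finset.range N).Nonempty := ⟨0, by simp; omega⟩
  refine ⟨avgM (Finset.range N) fun i => ν.map shift1^[i], avgM_prob hne' hpr, ?_, ?_, ?_⟩
  · intro f hf h0
    rw [avgM_integral hpr hf, Finset.sum_eq_zero, mul_zero]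
    intro i _
    rw [int_map ν hf]
    exact hint _ (hf.comp (cont_iter i)) (fun x hx => h0 _ (iter_mem hinv i hx))
  · intro f hf M hM
    have hf' : Continuous (fun x => f (shift1 x)) := hf.comp cont_shift
    rw [avgM_integral hpr hf, avgM_integral hpr hf', ← mul_sub,
      Finset.card_range]
    have e1 : ∀ i, ∫ x, f (shift1 x) ∂(ν.map shift1^[i]) = ∫ x, f (shift1^[i + 1] x) ∂ν := by
      intro i
      rw [int_map ν hf']
      simp only [Function.iterate_succ_apply']
    simp only [e1, int_map ν hf]
    rw [← Finset.sum_sub_distrib, Finset.sum_range_sub (fun i => ∫ x, f (shift1^[i] x) ∂ν),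
      abs_mul, abs_of_pos (inv_pos.2 hN')]
    gcongr
    have hb : ∀ i, |∫ x, f (shift1^[i] x) ∂ν| ≤ M := by
      intro i
      have := norm_integral_le_of_norm_le_const (μ := ν) (f := fun x => f (shift1^[i] x)) (C := M)
        (Eventually.of_forall fun x => hM _)
      simpa using this
    have h1 := abs_le.1 (hb N)
    have h2 := abs_le.1 (hb 0)
    rw [abs_le]
    constructor <;> linarith
  · intro m q hmq
    have hK : 0 < cnt Y N := by linarith [cnt_ge_one hne N]
    have hA : 0 ≤ Real.log (Fintype.card A) := Real.log_natCast_nonneg _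
    have h1 : ∀ r ∈ Finset.range m, N * topEnt1 Y ≤ m * Real.log (Fintype.card A) +
        ∑ k ∈ Finset.range q, HH m (ν.map shift1^[m * k + r]) := by
      intro r hr
      have hr := Finset.mem_range.1 hr
      have a1 := log_cnt_ge Y hne hN
      have a2 := le_HH (n := r + m * q) hK ν (hcyl _ (by omega))
      have a3 := HH_blocks' r m q ν
      have a4 : (r : ℝ) * Real.log (Fintype.card A) ≤ m * Real.log (Fintype.card A) := by
        gcongr
      linarith
    have h2 := Finset.sum_le_sum h1
    rw [Finset.sum_add_distrib, sum_range_blocks (fun i => HH m (ν.map shift1^[i])), ← hmq] at h2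
    simp only [Finset.sum_const, Finset.card_range, nsmul_eq_mul] at h2
    have h3 := HH_concave hne' hpr m
    rw [Finset.card_range] at h3
    have h4 := h2.trans (add_le_add_right h3 _)
    have h5 := mul_le_mul_of_nonneg_left h4 (inv_pos.2 hN').le
    have e : (N : ℝ)⁻¹ * (m * (N * topEnt1 Y)) = m * topEnt1 Y := by field_simp
    rw [e, mul_add, inv_mul_cancel_left₀ hN'.ne'] at h5
    exact h5

lemma exists_max (Y : Set (Cfg1 A)) (hne : Y.Nonempty) (hinv : ∀ x ∈ Y, shift1 x ∈ Y) :
    ∃ μ : Measure (Cfg1 A), IsProbabilityMeasure μ ∧ Invariant1 μ ∧ topEnt1 Y ≤ entropy1 μ ∧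
      ∀ f : Cfg1 A → ℝ, Continuous f → (∀ x ∈ Y, f x = 0) → ∫ x, f x ∂μ = 0 := by
  have h := fun n : ℕ => exists_muN Y hne hinv (N := n.factorial) (Nat.factorial_pos n)
  choose μs hpr h0 hsh hent using h
  let P : ℕ → ProbabilityMeasure (Cfg1 A) := fun n => ⟨μs n, hpr n⟩
  let U : Ultrafilter ℕ := hyperfilter ℕ
  have hU : (U : Filter ℕ) ≤ atTop := Nat.hyperfilter_le_atTop
  obtain ⟨μ, hμ⟩ : ∃ μ : ProbabilityMeasure (Cfg1 A), Tendsto P U (𝓝 μ) := by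
    obtain ⟨μ, -, hμ⟩ := (isCompact_univ (X := ProbabilityMeasure (Cfg1 A))).ultrafilter_le_nhds
      (U.map P) (by simp)
    exact ⟨μ, hμ⟩
  have hconv : ∀ f : Cfg1 A → ℝ, Continuous f →
      Tendsto (fun k => ∫ x, f x ∂(μs k)) U (𝓝 (∫ x, f x ∂(μ : Measure (Cfg1 A)))) := by
    intro f hf
    exact (ProbabilityMeasure.tendsto_iff_forall_integral_tendsto.1 hμ)
      (BoundedContinuousFunction.mkOfCompact ⟨f, hf⟩)
  have hfac : Tendsto (fun n : ℕ => ((n.factorial : ℕ) : ℝ)⁻¹) U (𝓝 0) := by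
    have : Tendsto (fun n : ℕ => ((n.factorial : ℕ) : ℝ)) atTop atTop :=
      tendsto_natCast_atTop_atTop.comp
        (tendsto_atTop_mono Nat.self_le_factorial tendsto_id)
    exact (tendsto_inv_atTop_zero.comp this).mono_left hU
  refine ⟨μ, inferInstance, ?_, ?_, ?_⟩
  · have hp1 : IsProbabilityMeasure (Measure.map shift1 (μ : Measure (Cfg1 A))) :=
      Measure.isProbabilityMeasure_map meas_shift.aemeasurable
    unfold Invariant1
    apply ext_of_forall_integral_eq_of_IsFiniteMeasure
    intro f
    rw [integral_map meas_shift.aemeasurable f.continuous.aestronglyMeasurable]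
    have t1 := (hconv _ (f.continuous.comp cont_shift)).sub (hconv _ f.continuous)
    have t2 : Tendsto (fun k => ∫ x, f (shift1 x) ∂(μs k) - ∫ x, f x ∂(μs k)) U (𝓝 0) := by
      refine squeeze_zero_norm (fun k => hsh k f f.continuous ‖f‖ (fun x => f.norm_coe_le_norm x)) ?_
      simpa using hfac.mul_const (2 * ‖f‖)
    exact sub_eq_zero.1 (tendsto_nhds_unique t1 t2)
  · refine le_entropy fun m hm => ?_
    have t1 := (hfac.mul_const (m * (m * Real.log (Fintype.card A)) : ℝ)).add
      (HH_tendsto (F := U) hpr hconv m)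
    rw [zero_mul, zero_add] at t1
    refine ge_of_tendsto t1 ?_
    have : ∀ᶠ n in (U : Filter ℕ), m ≤ n := hU (eventually_ge_atTop m)
    filter_upwards [this] with n hn
    obtain ⟨q, hq⟩ := Nat.dvd_factorial hm hn
    exact hent n m q hq
  · intro f hf hf0
    have t1 := hconv f hf
    simp only [h0 _ f hf hf0] at t1
    exact (tendsto_nhds_unique t1 tendsto_const_nhds)

end Exist

set_option linter.unusedSectionVars false
section Final

variable {A : Type} [Fintype A] [Nonempty A] [TopologicalSpace A] [DiscreteTopology A]
  [MeasurableSpace A] [BorelSpace A]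

lemma inv_iter {μ : Measure (Cfg1 A)} (hμ : Invariant1 μ) (k : ℕ) : μ.map shift1^[k] = μ := by
  induction k with
  | zero => simp
  | succ k ih =>
    rw [Function.iterate_succ, ← Measure.map_map (meas_iter k) meas_shift]
    unfold Invariant1 at hμ
    rw [hμ, ih]

lemma int_birk {φ : Cfg1 A → ℝ} (hc : Continuous φ) {μ : Measure (Cfg1 A)}
    [IsProbabilityMeasure μ] (hμ : Invariant1 μ) (n : ℕ) :
    ∫ x, birk φ n x ∂μ = n * ∫ x, φ x ∂μ := by
  unfold birk
  rw [integral_finset_sum _ fun k _ =>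
    integrable_cont (f := fun x => φ (shift1^[k] x)) (hc.comp (cont_iter k)) μ]
  have : ∀ k, ∫ x, φ (shift1^[k] x) ∂μ = ∫ x, φ x ∂μ := by
    intro k
    rw [← int_map μ hc, inv_iter hμ]
  simp [this]

lemma cont_birk {φ : Cfg1 A → ℝ} (hc : Continuous φ) (n : ℕ) : Continuous (birk φ n) := by
  unfold birk
  exact continuous_finset_sum _ fun k _ => hc.comp (cont_iter k)

lemma lim_log (c : ℝ) (D : ℕ) : Tendsto (fun n : ℕ => (n : ℝ)⁻¹ * (c + D * Real.log (n + 1)))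
    atTop (𝓝 0) := by
  have h1 : Tendsto (fun n : ℕ => (n : ℝ)⁻¹) atTop (𝓝 0) := tendsto_inv_atTop_nhds_zero_nat
  have h2 : Tendsto (fun n : ℕ => Real.log ((n : ℝ) + 1) / ((n : ℝ) + 1)) atTop (𝓝 0) := by
    have := (Real.isLittleO_log_id_atTop).tendsto_div_nhds_zero
    exact this.comp (tendsto_atTop_add_const_right _ 1 tendsto_natCast_atTop_atTop)
  have h3 : Tendsto (fun n : ℕ => (n : ℝ)⁻¹ * c + D * (Real.log ((n : ℝ) + 1) / ((n : ℝ) + 1) *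
      (1 + (n : ℝ)⁻¹))) atTop (𝓝 (0 * c + D * (0 * (1 + 0)))) :=
    (h1.mul_const c).add ((h2.mul (h1.const_add 1)).const_mul _)
  rw [show (0 * c + (D : ℝ) * (0 * (1 + 0))) = 0 by ring] at h3
  refine h3.congr' ?_
  filter_upwards [eventually_ge_atTop 1] with n hn
  have : (0 : ℝ) < n := by exact_mod_cast hn
  field_simp

lemma freeze {X₀ : Set (Cfg1 A)} {φ : Cfg1 A → ℝ} (hc : Continuous φ) (hφ : ∀ x, φ x ≤ 0)
    {B D : ℕ} {C : ℝ} (hC : 0 < C)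
    (hb : ∀ n : ℕ, wsum n (Wt φ B n) ≤ C * (n + 1 : ℝ) ^ D * Real.exp (topEnt1 X₀) ^ n)
    (μ : Measure (Cfg1 A)) [IsProbabilityMeasure μ] (hμ : Invariant1 μ) :
    entropy1 μ + B * ∫ x, φ x ∂μ ≤ topEnt1 X₀ := by
  have key : ∀ n : ℕ, 1 ≤ n → entropy1 μ + B * ∫ x, φ x ∂μ ≤
      (n : ℝ)⁻¹ * (Real.log C + D * Real.log (n + 1)) + topEnt1 X₀ := by
    intro n hn
    have hn' : (0 : ℝ) < n := by exact_mod_cast hn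
    have h1 := HH_gibbs n μ (fun w => Wt φ B n (extw n w)) (fun w => Wt_pos hφ B n _)
      (ψ := fun x => B * birk φ n x) ((integrable_cont (cont_birk hc n) μ).const_mul _) (by
        intro x
        rw [Real.le_log_iff_exp_le (Wt_pos hφ B n _)]
        exact le_Wt hφ B n fun i hi => by rw [extw_lt _ hi]; rfl)
    rw [integral_const_mul, int_birk hc hμ] at h1
    have h2 : Real.log (∑ w : Fin n → A, Wt φ B n (extw n w)) ≤
        Real.log (C * (n + 1 : ℝ) ^ D * Real.exp (topEnt1 X₀) ^ n) := by
      refine Real.log_le_log ?_ (hb n)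
      exact Finset.sum_pos (fun w _ => Wt_pos hφ B n _) Finset.univ_nonempty
    rw [Real.log_mul (by positivity) (by positivity), Real.log_mul (by positivity) (by positivity),
      Real.log_pow, Real.log_pow, Real.log_exp] at h2
    have h3 := entropy_le hn μ
    have h4 : n * entropy1 μ ≤ HH n μ := by
      have := mul_le_mul_of_nonneg_left h3 hn'.le
      rwa [mul_inv_cancel_left₀ hn'.ne'] at this
    rw [← sub_nonneg]
    have : (n : ℝ)⁻¹ * (Real.log C + D * Real.log (n + 1)) + topEnt1 X₀ -
      (entropy1 μ + B * ∫ x, φ x ∂μ) = (n : ℝ)⁻¹ * (Real.log C + D * Real.log (n + 1) + n * topEnt1 X₀ -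
        (n * entropy1 μ + B * (n * ∫ x, φ x ∂μ))) := by
      field_simp
    rw [this]
    exact mul_nonneg (by positivity) (by linarith)
  have hl := (lim_log (Real.log C) D).add_const (topEnt1 X₀)
  rw [zero_add] at hl
  refine ge_of_tendsto hl ?_
  filter_upwards [eventually_ge_atTop 1] with n hn using key n hn

lemma topEnt_univ : Real.log (Fintype.card A) ≤ topEnt1 (Set.univ : Set (Cfg1 A)) := by
  have : Nonempty {n : ℕ // 1 ≤ n} := ⟨⟨1, le_rfl⟩⟩
  refine le_ciInf ?_
  rintro ⟨n, hn⟩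
  have hn' : (0 : ℝ) < n := by exact_mod_cast hn
  have : lang1 (Set.univ : Set (Cfg1 A)) n = Set.univ := by
    ext w
    simp only [Set.mem_univ, iff_true]
    exact ⟨extw n w, trivial, fun i => extw_lt w i.2⟩
  simp only [this, Set.ncard_univ, Nat.card_eq_fintype_card, Fintype.card_fun, Fintype.card_fin]
  push_cast
  rw [Real.log_pow, inv_mul_cancel_left₀ hn'.ne']

lemma topEnt_lt {X₀ : Set (Cfg1 A)} {T : Set (A × A)}
    (hX : X₀ = { x : Cfg1 A | ∀ i : ℕ, (x i, x (i + 1)) ∈ T }) (hne : X₀.Nonempty)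
    (hproper : X₀ ≠ Set.univ) : topEnt1 X₀ < Real.log (Fintype.card A) := by
  obtain ⟨x, hx⟩ := (Set.ne_univ_iff_exists_notMem X₀).1 hproper
  have : ∃ n, ¬ Pre X₀ n x := by
    by_contra hc
    push Not at hc
    exact hx (sft_mem hX hc)
  obtain ⟨n, hn⟩ := this
  have hn1 : 1 ≤ n := by
    by_contra h
    obtain ⟨y, hy⟩ := hne
    exact hn ⟨y, hy, fun i hi => by omega⟩
  have hn' : (0 : ℝ) < n := by exact_mod_cast hn1
  have h1 := log_cnt_ge X₀ hne hn1
  have h2 : cnt X₀ n < (Fintype.card A : ℝ) ^ n := by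
    rw [cnt_eq]
    have h3 : (lang1 X₀ n).ncard < (Set.univ : Set (Fin n → A)).ncard := by
      apply Set.ncard_lt_ncard _ (Set.toFinite _)
      rw [Set.ssubset_univ_iff, Set.ne_univ_iff_exists_notMem]
      refine ⟨fun i => x i, ?_⟩
      rintro ⟨y, hy, e⟩
      exact hn ⟨y, hy, fun i hi => (e ⟨i, hi⟩).symm⟩
    rw [Set.ncard_univ, Nat.card_eq_fintype_card, Fintype.card_fun, Fintype.card_fin] at h3
    exact_mod_cast h3
  have h3 := Real.log_lt_log (by linarith [cnt_ge_one hne n]) h2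
  rw [Real.log_pow] at h3
  exact lt_of_mul_lt_mul_left (h1.trans_lt h3) hn'.le

theorem main (T : Set (A × A)) (X₀ : Set (Cfg1 A))
    (hX₀ : X₀ = { x : Cfg1 A | ∀ i : ℕ, (x i, x (i + 1)) ∈ T })
    (hne : X₀.Nonempty) (hproper : X₀ ≠ Set.univ)
    (a : ℕ → ℝ) (hpos : ∀ j, 0 < a j) (hdec : Antitone a)
    (hlim : Tendsto a atTop (𝓝 0))
    (ha : ∀ j : ℕ, 1 ≤ j → (1 : ℝ) / j ≤ a j)
    (φ : Cfg1 A → ℝ)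
    (hφ0 : ∀ x ∈ X₀, φ x = 0)
    (hφ1 : ∀ x ∉ X₀, ∀ j : ℕ, distToSub1 X₀ x = (2 : ℝ) ^ (-(j : ℤ)) → φ x = -(a j)) :
    ∃ βc : ℝ, 0 < βc ∧ FreezingPT1 φ βc ∧ ZTA1 φ = { μ | IsMME1 X₀ μ } := by
  have hneg : ∀ x ∉ X₀, φ x < 0 := fun x hx => phi_neg hX₀ hne hpos hφ1 hx
  have hφ : ∀ x, φ x ≤ 0 := fun x => by
    by_cases hx : x ∈ X₀
    · exact (hφ0 x hx).le
    · exact (hneg x hx).le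
  have hc : Continuous φ := phi_cont hX₀ hne hpos hdec hlim hφ0 hφ1
  have hlow : ∀ x, - a 0 ≤ φ x := fun x => by
    obtain ⟨y, hy⟩ := hne
    exact phi_lower hX₀ ⟨y, hy⟩ hpos hdec hφ0 hφ1 ⟨y, hy, fun i hi => by omega⟩
  obtain ⟨B, D, C, hC, hpb⟩ := part_bound hX₀ hne ha hdec
    (fun x k hx => phi_upper hX₀ hne hdec hφ1 hx) hφ
  set h0 := topEnt1 X₀ with hh0
  have hBF : ∀ μ : Measure (Cfg1 A), IsProbabilityMeasure μ → Invariant1 μ →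
      entropy1 μ + (B : ℝ) * ∫ x, φ x ∂μ ≤ h0 := fun μ _ hi => freeze hc hφ hC hpb μ hi
  have hXeq : X₀ = φ ⁻¹' {0} := by
    ext x
    by_cases hx : x ∈ X₀
    · simp [hx, hφ0 x hx]
    · simp [hx, (hneg x hx).ne]
  have hXm : MeasurableSet X₀ := by
    rw [hXeq]; exact hc.measurable (measurableSet_singleton 0)
  have hI : ∀ μ : Measure (Cfg1 A), ∫ x, φ x ∂μ ≤ 0 := fun μ => integral_nonpos hφ
  have hI2 : ∀ μ : Measure (Cfg1 A), IsProbabilityMeasure μ → - a 0 ≤ ∫ x, φ x ∂μ := by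
    intro μ hμ
    have := integral_mono (integrable_const (- a 0)) (integrable_cont hc μ) hlow
    simpa using this
  have hsupp : ∀ μ : Measure (Cfg1 A), IsProbabilityMeasure μ →
      (μ X₀ = 1 ↔ ∫ x, φ x ∂μ = 0) := by
    intro μ hμ
    have e1 : μ X₀ = 1 ↔ ∀ᵐ x ∂μ, x ∈ X₀ := (mem_ae_iff_prob_eq_one hXm).symm
    rw [e1]
    have e2 := integral_eq_zero_iff_of_nonneg (μ := μ) (f := fun x => - φ x)
      (fun x => by simpa using hφ x) (integrable_cont hc μ).neg
    rw [integral_neg, neg_eq_zero] at e2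
    rw [e2]
    refine ⟨fun h => ?_, fun h => ?_⟩
    · filter_upwards [h] with x hx
      simp [hφ0 x hx]
    · filter_upwards [h] with x hx
      rw [hXeq]
      simpa using hx
  obtain ⟨μ₀, hp0, hi0, he0, hz0⟩ := exists_max X₀ hne (sft_inv hX₀)
  have hint0 := hz0 φ hc hφ0
  have he0' : entropy1 μ₀ = h0 := by
    refine le_antisymm ?_ he0
    have := hBF μ₀ hp0 hi0
    rwa [hint0, mul_zero, add_zero] at this
  have hM0 : IsMME1 X₀ μ₀ := ⟨hp0, hi0, (hsupp μ₀ hp0).2 hint0, he0'⟩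
  let F : Set ℝ := {β | ∀ μ : Measure (Cfg1 A), IsProbabilityMeasure μ → Invariant1 μ →
      entropy1 μ + β * ∫ x, φ x ∂μ ≤ h0}
  have hFB : (B : ℝ) ∈ F := hBF
  have hFup : ∀ β ∈ F, ∀ β', β ≤ β' → β' ∈ F := by
    intro β hβ β' h μ hμ hi
    have := hβ μ hμ hi
    have := mul_le_mul_of_nonpos_right h (hI μ)
    linarith
  obtain ⟨μ₁, hp1, hi1, he1, -⟩ := exists_max (Set.univ : Set (Cfg1 A)) Set.univ_nonempty
    (fun _ _ => trivial)
  have hent1 : h0 < entropy1 μ₁ :=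
    (topEnt_lt hX₀ hne hproper).trans_le (topEnt_univ.trans he1)
  have hcneg : ∫ x, φ x ∂μ₁ < 0 := by
    refine lt_of_le_of_ne (hI μ₁) fun h => ?_
    have := hBF μ₁ hp1 hi1
    rw [h] at this
    linarith
  have hFlow : ∀ β ∈ F, (entropy1 μ₁ - h0) / (- ∫ x, φ x ∂μ₁) ≤ β := by
    intro β hβ
    rw [div_le_iff₀ (by linarith)]
    have := hβ μ₁ hp1 hi1
    linarith
  have hFbdd : BddBelow F := ⟨_, hFlow⟩
  have hβc : 0 < sInf F :=
    lt_of_lt_of_le (div_pos (by linarith) (by linarith)) (le_csInf ⟨_, hFB⟩ hFlow)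
  have hgt : ∀ β, sInf F < β → β ∈ F := by
    intro β h
    obtain ⟨b, hb, hlt⟩ := exists_lt_of_csInf_lt ⟨_, hFB⟩ h
    exact hFup b hb β hlt.le
  have hpress : ∀ β, sInf F < β → pressure1 φ β = h0 := by
    intro β h
    have hβ := hgt β h
    refine IsGreatest.csSup_eq ⟨⟨μ₀, hp0, hi0, by rw [he0', hint0]; ring⟩, ?_⟩
    rintro _ ⟨μ, hμ, hi, rfl⟩
    exact hβ μ hμ hi
  have hES : ∀ β, sInf F < β → ES1 φ β = {μ | IsMME1 X₀ μ} := by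
    intro β h
    ext μ
    simp only [ES1, Set.mem_setOf_eq, IsMME1, hpress β h]
    constructor
    · rintro ⟨hμ, hi, he⟩
      obtain ⟨b, hb1, hb2⟩ := exists_between h
      have h1 := hgt b hb1 μ hμ hi
      have hz : ∫ x, φ x ∂μ = 0 := by
        refine le_antisymm (hI μ) ?_
        by_contra hc'
        push Not at hc'
        have := mul_lt_mul_of_neg_right hb2 hc'
        linarith
      refine ⟨hμ, hi, (hsupp μ hμ).2 hz, ?_⟩
      rwa [hz, mul_zero, add_zero] at he
    · rintro ⟨hμ, hi, hs, he⟩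
      refine ⟨hμ, hi, ?_⟩
      rw [(hsupp μ hμ).1 hs, he]; ring
  refine ⟨sInf F, hβc, ⟨?_, ?_⟩, ?_⟩
  · intro β β' h h'
    rw [hES β h, hES β' h']
  · intro β β' h h' heq
    rw [hES β' h'] at heq
    have hm : μ₀ ∈ ES1 φ β := by rw [heq]; exact hM0
    have hnF : β ∉ F := fun hm => absurd (csInf_le hFbdd hm) (not_le.2 h)
    have hm2 := hm.2.2
    rw [hint0, he0', mul_zero, add_zero] at hm2
    apply hnF
    intro μ hμ hi
    rw [hm2]
    refine le_csSup ⟨Real.log (Fintype.card A) + |β| * a 0, ?_⟩ ⟨μ, hμ, hi, rfl⟩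
    rintro _ ⟨ν, hν, -, rfl⟩
    have h1 := entropy_le le_rfl ν
    have h2 := HH_le 1 ν
    have h3 : β * ∫ x, φ x ∂ν ≤ |β| * a 0 := by
      refine (le_abs_self _).trans ?_
      rw [abs_mul]
      gcongr
      rw [abs_le]
      exact ⟨hI2 ν hν, (hI ν).trans (hpos 0).le⟩
    simp only [Nat.cast_one, inv_one, one_mul] at h1 h2
    linarith
  · ext μ
    constructor
    · rintro ⟨hμ, hi, β, μs, hβ, hes, hconv⟩
      have hev : ∀ᶠ k in atTop, IsMME1 X₀ (μs k) := by
        filter_upwards [hβ.eventually_gt_atTop (sInf F)] with k hk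
        have := hes k
        rwa [hES _ hk] at this
      have hz : ∫ x, φ x ∂μ = 0 := by
        refine tendsto_nhds_unique (hconv φ hc) (tendsto_const_nhds.congr' ?_)
        filter_upwards [hev] with k hk
        exact ((hsupp _ hk.1).1 hk.2.2.1).symm
      refine ⟨hμ, hi, (hsupp μ hμ).2 hz, le_antisymm ?_ ?_⟩
      · have := hBF μ hμ hi
        rwa [hz, mul_zero, add_zero] at this
      · refine le_entropy fun n hn => ?_
        have hn' : (0 : ℝ) < n := by exact_mod_cast hn
        refine ge_of_tendsto (HH_tendsto (fun k => (hes k).1) hconv n) ?_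
        filter_upwards [hev] with k hk
        have := hk.1
        have h3 := mul_le_mul_of_nonneg_left (entropy_le hn (μs k)) hn'.le
        rwa [mul_inv_cancel_left₀ hn'.ne', hk.2.2.2] at h3
    · intro hμ
      refine ⟨hμ.1, hμ.2.1, fun k => sInf F + 1 + k, fun _ => μ, ?_, ?_, fun f _ => tendsto_const_nhds⟩
      · exact tendsto_atTop_add_const_left _ _ tendsto_natCast_atTop_atTop
      · intro k
        rw [hES _ (by have : (0 : ℝ) ≤ k := Nat.cast_nonneg k
                      linarith)]
        exact hμ

end Final

/-- **Theorem 5.1, one-sided SFTs.** Let `X₀⁺` be a nonempty proper one-step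
subshift of finite type determined by allowed transitions `T`, and let `(a_j)` be a decreasing
positive null sequence with `a_j ≥ 1/j`. Then the potential `φ⁺` (vanishing on `X₀⁺`, equal
to `-a_j` where `dist(x, X₀⁺) = 2^{-j}`) has a freezing phase transition at some `β_c > 0`,
and `ZTA(φ⁺)` is the set of measures of maximal entropy of `X₀⁺`. -/
theorem statement11 (A : Type) [Fintype A] [TopologicalSpace A] [DiscreteTopology A]
    [MeasurableSpace A] [BorelSpace A]
    (T : Set (A × A)) (X₀ : Set (Cfg1 A))
    (hX₀ : X₀ = { x : Cfg1 A | ∀ i : ℕ, (x i, x (i + 1)) ∈ T })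
    (hne : X₀.Nonempty) (hproper : X₀ ≠ Set.univ)
    (a : ℕ → ℝ) (hpos : ∀ j, 0 < a j) (hdec : Antitone a)
    (hlim : Tendsto a atTop (𝓝 0))
    (ha : ∀ j : ℕ, 1 ≤ j → (1 : ℝ) / j ≤ a j)
    (φ : Cfg1 A → ℝ)
    (hφ0 : ∀ x ∈ X₀, φ x = 0)
    (hφ1 : ∀ x ∉ X₀, ∀ j : ℕ, distToSub1 X₀ x = (2 : ℝ) ^ (-(j : ℤ)) → φ x = -(a j)) :
    ∃ βc : ℝ, 0 < βc ∧ FreezingPT1 φ βc ∧ ZTA1 φ = { μ | IsMME1 X₀ μ } := by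
  have hA : Nonempty A := by
    obtain ⟨x, _⟩ := hne
    exact ⟨x 0⟩
  exact main T X₀ hX₀ hne hproper a hpos hdec hlim ha φ hφ0 hφ1

end Freezing
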